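/- arXiv:2004.06712 — 4 statements merged into one kernel-verified Lean document; each statement's English description precedes it below -/
import Mathlib

section
/- Let (Ω, 𝒜, μ) be a σ-finite measure space, X a Banach space, and M_n : X → L⁰(μ) a sequence of linear maps that is uniformly equicontinuous in measure at zero in X: for every ε > 0 and δ > 0 there exists γ > 0 such that for every x ∈ X with ‖x‖ < γ there is a measurable set E ⊆ Ω with μ(Ω∖E) ≤ ε and sup_n ‖(M_n(x))·1_E‖_∞ ≤ δ. Then the set { x ∈ X : (M_n(x))_{n≥1} converges almost uniformly } is closed in X. -/
open MeasureTheory Filter Set ENNReal Topology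

variable {Ω : Type*} [MeasurableSpace Ω]

/-- Almost uniform convergence of a net `F` to `f`. -/
def AuTendsto {ι : Type*} (μ : Measure Ω) (l : Filter ι) (F : ι → Ω →ₘ[μ] ℝ)
    (f : Ω →ₘ[μ] ℝ) : Prop :=
  ∀ ε : ℝ, 0 < ε → ∃ E : Set Ω, MeasurableSet E ∧ μ Eᶜ ≤ ENNReal.ofReal ε ∧
    Tendsto (fun i => eLpNorm (E.indicator (⇑(F i - f))) ⊤ μ) l (𝓝 0)

theorem au_aux_limit (μ : Measure Ω) (g : ℕ → Ω → ℝ) (hg : ∀ n, AEMeasurable (g n) μ)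
    (h : ∀ ε : ℝ, 0 < ε → ∀ δ : ℝ, 0 < δ → ∃ E : Set Ω, MeasurableSet E ∧
      μ Eᶜ ≤ ENNReal.ofReal ε ∧ ∃ N : ℕ, ∀ n ≥ N, ∀ m ≥ N,
        ∀ᵐ ω ∂μ, ω ∈ E → |g n ω - g m ω| ≤ δ) :
    ∃ f : Ω → ℝ, AEMeasurable f μ ∧ ∀ ε : ℝ, 0 < ε → ∃ E : Set Ω, MeasurableSet E ∧
      μ Eᶜ ≤ ENNReal.ofReal ε ∧ ∀ δ : ℝ, 0 < δ → ∃ N : ℕ, ∀ n ≥ N,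
        ∀ᵐ ω ∂μ, ω ∈ E → |g n ω - f ω| ≤ δ := by
  have hp : ∀ k : ℕ, (0 : ℝ) < (1 / 2) ^ k := fun k => by positivity
  choose E hEm hE N hN using fun k : ℕ => h ((1 / 2) ^ k) (hp k) ((1 / 2) ^ k) (hp k)
  have hsum : ∑' k, μ (E k)ᶜ ≠ ⊤ := by
    refine ne_top_of_le_ne_top ?_ (ENNReal.tsum_le_tsum hE)
    rw [← ENNReal.ofReal_tsum_of_nonneg (fun k => (hp k).le) summable_geometric_two]
    exact ENNReal.ofReal_ne_top
  have hall : ∀ᵐ ω ∂μ, ∀ k, ∀ n ≥ N k, ∀ m ≥ N k, ω ∈ E k → |g n ω - g m ω| ≤ (1 / 2) ^ k := by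
    simp only [ae_all_iff]
    exact fun k n hn m hm => hN k n hn m hm
  have hsmall : ∀ δ : ℝ, 0 < δ → ∀ᶠ k : ℕ in atTop, ((1 : ℝ) / 2) ^ k < δ := fun δ hδ =>
    (_root_.tendsto_pow_atTop_nhds_zero_of_lt_one (r := (1 : ℝ) / 2) (by norm_num)
      (by norm_num)).eventually_lt_const hδ
  have hlim : ∀ᵐ ω ∂μ, ∃ l, Tendsto (fun n => g n ω) atTop (𝓝 l) := by
    filter_upwards [hall, ae_eventually_notMem hsum] with ω h1 h2
    apply cauchySeq_tendsto_of_complete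
    rw [Metric.cauchySeq_iff]
    intro δ hδ
    obtain ⟨k, hk1, hk2⟩ := ((hsmall δ hδ).and h2).exists
    refine ⟨N k, fun m hm n hn => ?_⟩
    rw [Real.dist_eq]
    exact (h1 k m hm n hn (by simpa using hk2)).trans_lt hk1
  obtain ⟨f, hfm, hf⟩ := measurable_limit_of_tendsto_metrizable_ae hg hlim
  refine ⟨f, hfm.aemeasurable, fun ε hε => ?_⟩
  have ht := (ENNReal.tendsto_sum_nat_add (fun k => μ (E k)ᶜ) hsum).eventually_le_const
    (ENNReal.ofReal_pos.2 hε)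
  obtain ⟨K, hK⟩ := ht.exists
  refine ⟨⋂ i, E (i + K), MeasurableSet.iInter fun i => hEm _, ?_, fun δ hδ => ?_⟩
  · rw [compl_iInter]
    exact (measure_iUnion_le _).trans hK
  · obtain ⟨k, hk1, hk2⟩ := ((hsmall δ hδ).and (eventually_ge_atTop K)).exists
    refine ⟨N k, fun n hn => ?_⟩
    filter_upwards [hall, hf] with ω h1 h2 hω
    have hωk : ω ∈ E k := by
      have := mem_iInter.1 hω (k - K)
      rwa [Nat.sub_add_cancel hk2] at this
    refine le_of_tendsto ((tendsto_const_nhds.sub h2).abs) ?_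
    filter_upwards [eventually_ge_atTop (N k)] with m hm
    exact (h1 k n hn m hm hωk).trans hk1.le

theorem au_aux_norm (μ : Measure Ω) (E : Set Ω) (u : Ω → ℝ) (δ : ℝ) (hδ : 0 ≤ δ) :
    eLpNorm (E.indicator u) ⊤ μ ≤ ENNReal.ofReal δ ↔ ∀ᵐ ω ∂μ, ω ∈ E → |u ω| ≤ δ := by
  rw [eLpNorm_exponent_top, show eLpNormEssSup (E.indicator u) μ ≤ ENNReal.ofReal δ ↔
    ∀ᵐ ω ∂μ, ‖E.indicator u ω‖ₑ ≤ ENNReal.ofReal δ from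
      ⟨fun h => ae_le_eLpNormEssSup.mono fun _ hω => hω.trans h, fun h => essSup_le_of_ae_le _ h⟩]
  refine eventually_congr (Eventually.of_forall fun ω => ?_)
  by_cases h : ω ∈ E
  · simp [h, ← ofReal_norm_eq_enorm, ENNReal.ofReal_le_ofReal_iff hδ]
  · simp [h]

/-- **Commutative case of Proposition 3.5**: if a sequence of linear maps
`M_n : X → L⁰(μ)` is uniformly equicontinuous in measure at zero in `X`, then the set of
`x ∈ X` for which `(M_n(x))` converges almost uniformly is closed in `X`. -/
theorem au_convergence_set_closed (μ : Measure Ω) [SigmaFinite μ]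
    {X : Type*} [NormedAddCommGroup X] [NormedSpace ℝ X] [CompleteSpace X]
    (M : ℕ → X →ₗ[ℝ] (Ω →ₘ[μ] ℝ))
    (huem : ∀ ε : ℝ, 0 < ε → ∀ δ : ℝ, 0 < δ → ∃ γ : ℝ, 0 < γ ∧
      ∀ x : X, ‖x‖ < γ → ∃ E : Set Ω, MeasurableSet E ∧ μ Eᶜ ≤ ENNReal.ofReal ε ∧
        ∀ n : ℕ, eLpNorm (E.indicator ⇑(M n x)) ⊤ μ ≤ ENNReal.ofReal δ) :
    IsClosed {x : X | ∃ f : Ω →ₘ[μ] ℝ, AuTendsto μ atTop (fun n => M n x) f} := by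
  rw [← isSeqClosed_iff_isClosed]
  intro y x hy hyx
  have key := au_aux_limit μ (fun n => ⇑(M n x)) (fun n => (M n x).aemeasurable) ?_
  · obtain ⟨f, hfm, hf⟩ := key
    refine ⟨AEEqFun.mk f hfm.aestronglyMeasurable, fun ε hε => ?_⟩
    obtain ⟨E, hEm, hE, h⟩ := hf ε hε
    refine ⟨E, hEm, hE, ?_⟩
    rw [ENNReal.tendsto_nhds_zero]
    intro c hc
    obtain ⟨δ, hδ0, hδc⟩ : ∃ δ : ℝ, 0 < δ ∧ ENNReal.ofReal δ ≤ c := by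
      obtain ⟨r, hr0, hrc⟩ := ENNReal.lt_iff_exists_nnreal_btwn.1 hc
      exact ⟨r, by exact_mod_cast hr0, by simpa using hrc.le⟩
    obtain ⟨N, hN⟩ := h δ hδ0
    filter_upwards [eventually_ge_atTop N] with n hn
    refine le_trans ((au_aux_norm μ E _ δ hδ0.le).2 ?_) hδc
    filter_upwards [hN n hn, AEEqFun.coeFn_sub (M n x) (AEEqFun.mk f hfm.aestronglyMeasurable),
      AEEqFun.coeFn_mk f hfm.aestronglyMeasurable] with ω h1 h2 h3 hω
    rw [h2, Pi.sub_apply, h3]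
    exact h1 hω
  · intro ε hε δ hδ
    obtain ⟨γ, hγ, hM⟩ := huem (ε / 2) (by positivity) (δ / 4) (by positivity)
    obtain ⟨k, hk⟩ := ((tendsto_iff_norm_sub_tendsto_zero.1 hyx).eventually_lt_const hγ).exists
    obtain ⟨E, hEm, hE, hEn⟩ := hM _ hk
    obtain ⟨f, hf⟩ := hy k
    obtain ⟨F, hFm, hF, hFn⟩ := hf (ε / 2) (by positivity)
    have hev := (ENNReal.tendsto_nhds_zero.1 hFn) (ENNReal.ofReal (δ / 4))
      (ENNReal.ofReal_pos.2 (by positivity))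
    obtain ⟨N, hN⟩ := eventually_atTop.1 hev
    refine ⟨E ∩ F, hEm.inter hFm, ?_, N, fun n hn m hm => ?_⟩
    · rw [compl_inter]
      refine (measure_union_le _ _).trans ((add_le_add hE hF).trans ?_)
      rw [← ENNReal.ofReal_add (by positivity) (by positivity), add_halves]
    · have hδ4 : 0 ≤ δ / 4 := by positivity
      have a1 := fun n => (au_aux_norm μ E _ _ hδ4).1 (hEn n)
      have a2 := fun n hn => (au_aux_norm μ F _ _ hδ4).1 (hN n hn)
      simp only [map_sub] at a1
      filter_upwards [a1 n, a1 m, a2 n hn, a2 m hm, AEEqFun.coeFn_sub (M n (y k)) (M n x),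
        AEEqFun.coeFn_sub (M m (y k)) (M m x), AEEqFun.coeFn_sub (M n (y k)) f,
        AEEqFun.coeFn_sub (M m (y k)) f] with ω b1 b2 b3 b4 c1 c2 c3 c4 hω
      have b1 := b1 hω.1
      have b2 := b2 hω.1
      have b3 := b3 hω.2
      have b4 := b4 hω.2
      rw [c1, Pi.sub_apply, abs_le] at b1
      rw [c2, Pi.sub_apply, abs_le] at b2
      rw [c3, Pi.sub_apply, abs_le] at b3
      rw [c4, Pi.sub_apply, abs_le] at b4
      rw [abs_le]
      constructor <;> linarith [b1.1, b1.2, b2.1, b2.2, b3.1, b3.2, b4.1, b4.2]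
end

section
/- Let (Ω, 𝒜, μ) be a σ-finite measure space, 1 ≤ p < ∞, and let M_n : L^p(μ) → L⁰(μ) be a sequence of positive continuous linear maps (positivity: M_n(f) ≥ 0 a.e. whenever f ≥ 0 a.e.; continuity: f_k → f in L^p implies M_n(f_k) → M_n(f) in measure) such that for every f ∈ L^p(μ) and every ε > 0 there exists a measurable set E ⊆ Ω with μ(Ω∖E) ≤ ε and sup_n ‖(M_n(f))·1_E‖_∞ < ∞. Then the set { f ∈ L^p(μ) : (M_n(f))_{n≥1} converges almost uniformly } is closed in L^p(μ). -/
open MeasureTheory Filter Set ENNReal Topology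

variable {Ω : Type*} [MeasurableSpace Ω]

theorem aux_ae_of_tendsto {μ : Measure Ω} {E : Set Ω} (hE : MeasurableSet E)
    (h : Ω →ₘ[μ] ℝ) (C : ℝ) (hC : 0 ≤ C)
    (hle : eLpNorm (E.indicator ⇑h) ⊤ μ ≤ ENNReal.ofReal C) :
    ∀ᵐ x ∂μ, x ∈ E → |h x| ≤ C := by
  rw [eLpNorm_exponent_top] at hle
  have := ae_le_eLpNormEssSup (f := E.indicator ⇑h) (μ := μ)
  filter_upwards [this] with x hx hxE
  have h2 := hx.trans hle
  rw [indicator_of_mem hxE, Real.enorm_eq_ofReal_abs] at h2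
  exact (ENNReal.ofReal_le_ofReal_iff hC).1 h2

theorem aux_cauchy_conv {μ : Measure Ω} (F : ℕ → Ω →ₘ[μ] ℝ)
    (H : ∀ ε : ℝ, 0 < ε → ∃ E : Set Ω, MeasurableSet E ∧ μ Eᶜ ≤ ENNReal.ofReal ε ∧
      ∀ δ : ℝ, 0 < δ → ∃ N : ℕ, ∀ m ≥ N, ∀ n ≥ N, ∀ᵐ x ∂μ, x ∈ E → |F m x - F n x| ≤ δ) :
    ∃ g : Ω →ₘ[μ] ℝ, AuTendsto μ atTop F g := by
  have key : ∀ ε : ℝ, 0 < ε → ∃ E : Set Ω, MeasurableSet E ∧ μ Eᶜ ≤ ENNReal.ofReal ε ∧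
      (∀ᵐ x ∂μ, x ∈ E → ∃ l, Tendsto (fun n => F n x) atTop (𝓝 l)) := by
    intro ε hε
    obtain ⟨E, hE, hμ, hc⟩ := H ε hε
    refine ⟨E, hE, hμ, ?_⟩
    choose N hN using fun j : ℕ => hc (1 / ((j : ℝ) + 1)) (by positivity)
    have : ∀ᵐ x ∂μ, ∀ j, ∀ m, m ≥ N j → ∀ n, n ≥ N j → x ∈ E →
        |F m x - F n x| ≤ 1 / ((j : ℝ) + 1) := by
      rw [ae_all_iff]; intro j
      rw [ae_all_iff]; intro m
      rw [eventually_imp_distrib_left]; intro hm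
      rw [ae_all_iff]; intro n
      rw [eventually_imp_distrib_left]; intro hn
      exact hN j m hm n hn
    filter_upwards [this] with x hx hxE
    apply cauchySeq_tendsto_of_complete
    rw [Metric.cauchySeq_iff]
    intro η hη
    obtain ⟨j, hj⟩ := exists_nat_one_div_lt hη
    exact ⟨N j, fun m hm n hn => by
      rw [Real.dist_eq]; exact (hx j m hm n hn hxE).trans_lt hj⟩
  have hae : ∀ᵐ x ∂μ, ∃ l, Tendsto (fun n => F n x) atTop (𝓝 l) := by
    rw [ae_iff]
    apply le_antisymm _ (zero_le)
    apply ENNReal.le_of_forall_pos_le_add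
    intro ε hε _
    obtain ⟨E, hE, hμ, hc⟩ := key ε (by exact_mod_cast hε)
    rw [zero_add]
    rw [ENNReal.ofReal_coe_nnreal] at hμ
    refine le_trans (measure_mono_ae ?_) hμ
    filter_upwards [hc] with x hx hx2 hxE
    exact hx2 (hx hxE)
  obtain ⟨g, hg, hlim⟩ := measurable_limit_of_tendsto_metrizable_ae
    (L := atTop) (fun n => (F n).measurable.aemeasurable) hae
  refine ⟨AEEqFun.mk g hg.aestronglyMeasurable, ?_⟩
  intro ε hε
  obtain ⟨E, hE, hμ, hc⟩ := H ε hε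
  refine ⟨E, hE, hμ, ?_⟩
  rw [ENNReal.tendsto_atTop_zero]
  intro η hη
  obtain ⟨δ, hδ0, hδ⟩ : ∃ δ : ℝ, 0 < δ ∧ ENNReal.ofReal δ ≤ η := by
    obtain ⟨d, hd0, hd⟩ := ENNReal.lt_iff_exists_nnreal_btwn.1 hη
    exact ⟨d, by exact_mod_cast hd0, by rw [ENNReal.ofReal_coe_nnreal]; exact hd.le⟩
  obtain ⟨N, hN⟩ := hc δ hδ0
  refine ⟨N, fun n hn => le_trans ?_ hδ⟩
  rw [eLpNorm_exponent_top]
  apply eLpNormEssSup_le_of_ae_bound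
  have h1 : ∀ᵐ x ∂μ, ∀ m, m ≥ N → x ∈ E → |F n x - F m x| ≤ δ := by
    rw [ae_all_iff]; intro m
    rw [eventually_imp_distrib_left]; intro hm
    exact hN n hn m hm
  filter_upwards [h1, hlim, AEEqFun.coeFn_mk g hg.aestronglyMeasurable,
    AEEqFun.coeFn_sub (F n) (AEEqFun.mk g hg.aestronglyMeasurable)] with x a b c d
  by_cases hxE : x ∈ E
  · rw [indicator_of_mem hxE, d, Pi.sub_apply, c, Real.norm_eq_abs]
    refine le_of_tendsto ((tendsto_const_nhds.sub b).abs) ?_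
    filter_upwards [eventually_ge_atTop N] with m hm using a m hm hxE
  · rw [indicator_of_notMem hxE]; simpa using hδ0.le

theorem aux_conv_cauchy {μ : Measure Ω} (F : ℕ → Ω →ₘ[μ] ℝ) (g : Ω →ₘ[μ] ℝ)
    (H : AuTendsto μ atTop F g) (ε : ℝ) (hε : 0 < ε) :
    ∃ E : Set Ω, MeasurableSet E ∧ μ Eᶜ ≤ ENNReal.ofReal ε ∧
      ∀ δ : ℝ, 0 < δ → ∃ N : ℕ, ∀ m ≥ N, ∀ n ≥ N, ∀ᵐ x ∂μ, x ∈ E → |F m x - F n x| ≤ δ := by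
  obtain ⟨E, hE, hμ, hc⟩ := H ε hε
  refine ⟨E, hE, hμ, fun δ hδ => ?_⟩
  rw [ENNReal.tendsto_atTop_zero] at hc
  obtain ⟨N, hN⟩ := hc (ENNReal.ofReal (δ / 2)) (by simpa using hδ)
  refine ⟨N, fun m hm n hn => ?_⟩
  filter_upwards [aux_ae_of_tendsto hE _ _ (by positivity) (hN m hm),
    aux_ae_of_tendsto hE _ _ (by positivity) (hN n hn),
    AEEqFun.coeFn_sub (F m) g, AEEqFun.coeFn_sub (F n) g] with x a b c d hxE
  have a := a hxE
  have b := b hxE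
  rw [c, Pi.sub_apply, abs_le] at a
  rw [d, Pi.sub_apply, abs_le] at b
  rw [abs_le]
  constructor <;> linarith

theorem aux_closed {μ : Measure Ω} {p : ℝ≥0∞} [Fact (1 ≤ p)]
    (M : ℕ → (Lp ℝ p μ) →ₗ[ℝ] (Ω →ₘ[μ] ℝ))
    (hcont : ∀ n : ℕ, ∀ (f : ℕ → Lp ℝ p μ) (f₀ : Lp ℝ p μ), Tendsto f atTop (𝓝 f₀) →
      TendstoInMeasure μ (fun k => ⇑(M n (f k))) atTop ⇑(M n f₀)) (ε : ℝ≥0∞) (C : ℝ) :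
    IsClosed {f : Lp ℝ p μ | μ {x | ∃ n, C < |M n f x|} ≤ ε} := by
  apply IsSeqClosed.isClosed
  intro f f₀ hf hlim
  simp only [mem_setOf_eq] at hf ⊢
  let S : ℕ → Set Ω := fun n => {x | ∃ k ≤ n, C + 1 / ((n : ℝ) + 1) < |M k f₀ x|}
  have hS : {x | ∃ n, C < |M n f₀ x|} = ⋃ n, S n := by
    ext x
    simp only [mem_setOf_eq, mem_iUnion, S]
    constructor
    · rintro ⟨n, hn⟩
      obtain ⟨j, hj⟩ := exists_nat_one_div_lt (sub_pos.2 hn)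
      refine ⟨max n j, n, le_max_left _ _, ?_⟩
      have : 1 / (((max n j : ℕ) : ℝ) + 1) ≤ 1 / ((j : ℝ) + 1) :=
        Nat.one_div_le_one_div (le_max_right _ _)
      linarith
    · rintro ⟨n, k, _, hk⟩
      have : (0 : ℝ) < 1 / ((n : ℝ) + 1) := by positivity
      exact ⟨k, by linarith⟩
  have hmono : Monotone S := by
    intro a b hab x
    rintro ⟨k, hk, h⟩
    refine ⟨k, hk.trans hab, ?_⟩
    have : 1 / ((b : ℝ) + 1) ≤ 1 / ((a : ℝ) + 1) := Nat.one_div_le_one_div hab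
    linarith
  rw [hS, hmono.measure_iUnion]
  refine iSup_le fun n => ?_
  have hη : (0 : ℝ) < 1 / ((n : ℝ) + 1) := by positivity
  have hb : ∀ j, μ (S n) ≤ ε + ∑ k ∈ Finset.range (n + 1),
      μ {x | 1 / ((n : ℝ) + 1) ≤ ‖M k (f j) x - M k f₀ x‖} := by
    intro j
    have hsub : S n ⊆ {x | ∃ n, C < |M n (f j) x|} ∪ ⋃ k ∈ Finset.range (n + 1),
        {x | 1 / ((n : ℝ) + 1) ≤ ‖M k (f j) x - M k f₀ x‖} := by
      rintro x ⟨k, hk, hx⟩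
      by_cases h : C < |M k (f j) x|
      · exact Or.inl ⟨k, h⟩
      · right
        simp only [mem_iUnion, Finset.mem_range]
        refine ⟨k, by omega, ?_⟩
        rw [mem_setOf_eq, Real.norm_eq_abs]
        have := abs_sub_abs_le_abs_sub (M k f₀ x) (M k (f j) x)
        rw [abs_sub_comm] at this
        linarith
    refine (measure_mono hsub).trans ((measure_union_le _ _).trans ?_)
    exact add_le_add (hf j) (measure_biUnion_finset_le _ _)
  have ht : Tendsto (fun j => ε + ∑ k ∈ Finset.range (n + 1),
      μ {x | 1 / ((n : ℝ) + 1) ≤ ‖M k (f j) x - M k f₀ x‖}) atTop (𝓝 (ε + 0)) := by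
    apply Tendsto.const_add
    rw [show (0 : ℝ≥0∞) = ∑ k ∈ Finset.range (n + 1), 0 by simp]
    apply tendsto_finsetSum
    intro k _
    exact (tendstoInMeasure_iff_norm.1 (hcont k f f₀ hlim)) _ hη
  rw [add_zero] at ht
  exact ge_of_tendsto' ht hb

theorem aux_maximal {μ : Measure Ω} {p : ℝ≥0∞} [Fact (1 ≤ p)]
    (M : ℕ → (Lp ℝ p μ) →ₗ[ℝ] (Ω →ₘ[μ] ℝ))
    (hcont : ∀ n : ℕ, ∀ (f : ℕ → Lp ℝ p μ) (f₀ : Lp ℝ p μ), Tendsto f atTop (𝓝 f₀) →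
      TendstoInMeasure μ (fun k => ⇑(M n (f k))) atTop ⇑(M n f₀))
    (hmax : ∀ f : Lp ℝ p μ, ∀ ε : ℝ, 0 < ε →
      ∃ E : Set Ω, MeasurableSet E ∧ μ Eᶜ ≤ ENNReal.ofReal ε ∧
        (⨆ n : ℕ, eLpNorm (E.indicator ⇑(M n f)) ⊤ μ) < ∞)
    (ε : ℝ) (hε : 0 < ε) (δ : ℝ) (hδ : 0 < δ) :
    ∃ r : ℝ, 0 < r ∧ ∀ g : Lp ℝ p μ, ‖g‖ < r →
      μ {x | ∃ n, δ < |M n g x|} ≤ ENNReal.ofReal ε := by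
  let A : ℕ → Set (Lp ℝ p μ) := fun N =>
    {f | μ {x | ∃ n, (N : ℝ) < |M n f x|} ≤ ENNReal.ofReal (ε / 2)}
  have hcov : ⋃ N, A N = univ := by
    rw [eq_univ_iff_forall]
    intro f
    obtain ⟨E, hE, hμ, hs⟩ := hmax f (ε / 2) (by positivity)
    obtain ⟨N, hN⟩ := ENNReal.exists_nat_gt hs.ne
    rw [mem_iUnion]
    refine ⟨N, ?_⟩
    refine le_trans (measure_mono_ae ?_) hμ
    have : ∀ᵐ x ∂μ, ∀ n, x ∈ E → |M n f x| ≤ N := by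
      rw [ae_all_iff]; intro n
      refine aux_ae_of_tendsto hE _ _ (Nat.cast_nonneg N) ?_
      rw [ENNReal.ofReal_natCast]
      exact (le_iSup (fun n => eLpNorm (E.indicator ⇑(M n f)) ⊤ μ) n).trans hN.le
    filter_upwards [this] with x hx hx2 hxE
    obtain ⟨n, hn⟩ := hx2
    exact absurd (hx n hxE) (not_le.2 hn)
  obtain ⟨N, f₀, hf₀⟩ := nonempty_interior_of_iUnion_of_closed
    (fun N : ℕ => aux_closed M hcont (ENNReal.ofReal (ε / 2)) N) hcov
  rw [mem_interior_iff_mem_nhds, Metric.mem_nhds_iff] at hf₀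
  obtain ⟨r, hr, hball⟩ := hf₀
  have hc : (0 : ℝ) < (2 * N + 1) / δ := by positivity
  set c : ℝ := (2 * N + 1) / δ with hcdef
  refine ⟨r / c, by positivity, fun g hg => ?_⟩
  have h1 : f₀ + c • g ∈ A N := hball (by
    rw [mem_ball_iff_norm, add_sub_cancel_left, norm_smul, Real.norm_of_nonneg hc.le]
    rw [lt_div_iff₀ hc] at hg
    linarith)
  have h0 : f₀ ∈ A N := hball (Metric.mem_ball_self hr)
  have hae : ∀ᵐ x ∂μ, ∀ n, M n (f₀ + c • g) x = M n f₀ x + c * M n g x := by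
    rw [ae_all_iff]; intro n
    rw [map_add, map_smul]
    filter_upwards [AEEqFun.coeFn_add (M n f₀) (c • M n g), AEEqFun.coeFn_smul c (M n g)] with x a b
    rw [a, Pi.add_apply, b, Pi.smul_apply, smul_eq_mul]
  calc μ {x | ∃ n, δ < |M n g x|}
      ≤ μ ({x | ∃ n, (N : ℝ) < |M n (f₀ + c • g) x|} ∪ {x | ∃ n, (N : ℝ) < |M n f₀ x|}) := by
        apply measure_mono_ae
        filter_upwards [hae] with x hx hx2
        obtain ⟨n, hn⟩ := hx2
        by_contra hcon
        have hcon' : ¬ ((∃ n, (N : ℝ) < |M n (f₀ + c • g) x|) ∨ (∃ n, (N : ℝ) < |M n f₀ x|)) := hcon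
        push Not at hcon'
        have e1 := hcon'.1 n
        have e2 := hcon'.2 n
        rw [hx n] at e1
        have e3 : |c * M n g x| ≤ 2 * N := by
          rw [abs_le] at *
          constructor <;> linarith
        rw [abs_mul, abs_of_pos hc] at e3
        have e4 : c * δ = 2 * N + 1 := by rw [hcdef]; field_simp
        have : c * δ < c * |M n g x| := by gcongr
        linarith
    _ ≤ ENNReal.ofReal (ε / 2) + ENNReal.ofReal (ε / 2) :=
        (measure_union_le _ _).trans (add_le_add h1 h0)
    _ = ENNReal.ofReal ε := by
        rw [← ENNReal.ofReal_add (by positivity) (by positivity), add_halves]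

/-- **Commutative case of Theorem 3.6**: let `1 ≤ p < ∞` and let
`M_n : L^p(μ) → L⁰(μ)` be a sequence of positive continuous linear maps such that for
every `f ∈ L^p(μ)` and `ε > 0` there is a measurable set `E` with `μ(Ω∖E) ≤ ε` and
`sup_n ‖M_n(f)·1_E‖_∞ < ∞`.  Then the set of `f` for which `(M_n(f))` converges
almost uniformly is closed in `L^p(μ)`. -/
theorem au_convergence_set_closed_Lp (μ : Measure Ω) [SigmaFinite μ]
    (p : ℝ≥0∞) [Fact (1 ≤ p)] (hp2 : p ≠ ∞)
    (M : ℕ → (Lp ℝ p μ) →ₗ[ℝ] (Ω →ₘ[μ] ℝ))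
    (hpos : ∀ n : ℕ, ∀ f : Lp ℝ p μ, 0 ≤ f → 0 ≤ M n f)
    (hcont : ∀ n : ℕ, ∀ (f : ℕ → Lp ℝ p μ) (f₀ : Lp ℝ p μ), Tendsto f atTop (𝓝 f₀) →
      TendstoInMeasure μ (fun k => ⇑(M n (f k))) atTop ⇑(M n f₀))
    (hmax : ∀ f : Lp ℝ p μ, ∀ ε : ℝ, 0 < ε →
      ∃ E : Set Ω, MeasurableSet E ∧ μ Eᶜ ≤ ENNReal.ofReal ε ∧
        (⨆ n : ℕ, eLpNorm (E.indicator ⇑(M n f)) ⊤ μ) < ∞) :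
    IsClosed {f : Lp ℝ p μ | ∃ g : Ω →ₘ[μ] ℝ, AuTendsto μ atTop (fun n => M n f) g} := by
  apply IsSeqClosed.isClosed
  intro u f hu hlim
  apply aux_cauchy_conv
  intro ε hε
  have step : ∀ j : ℕ, ∃ E : Set Ω, MeasurableSet E ∧ μ Eᶜ ≤ ENNReal.ofReal (ε / 2 / 2 ^ j / 2) ∧
      ∃ N : ℕ, ∀ m ≥ N, ∀ n ≥ N, ∀ᵐ x ∂μ, x ∈ E →
        |M m f x - M n f x| ≤ 3 * (1 / ((j : ℝ) + 1)) := by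
    intro j
    set d : ℝ := 1 / ((j : ℝ) + 1) with hd
    have hd0 : 0 < d := by positivity
    set e : ℝ := ε / 2 / 2 ^ j / 2 with he
    have he0 : 0 < e := by positivity
    obtain ⟨r, hr, hmx⟩ := aux_maximal M hcont hmax (e / 2) (by positivity) d hd0
    obtain ⟨i, hi⟩ := (Metric.tendsto_atTop.1 hlim r hr)
    have hi := hi i le_rfl
    rw [dist_comm, dist_eq_norm] at hi
    obtain ⟨g, hg⟩ := hu i
    obtain ⟨E, hE, hμ, hc⟩ := aux_conv_cauchy _ g hg (e / 2) (by positivity)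
    obtain ⟨N, hN⟩ := hc d hd0
    have hmeas : MeasurableSet {x | ∃ n, d < |M n (f - u i) x|} := by
      rw [setOf_exists]
      exact MeasurableSet.iUnion fun n =>
        measurableSet_lt measurable_const (M n (f - u i)).measurable.abs
    refine ⟨E ∩ {x | ∃ n, d < |M n (f - u i) x|}ᶜ, hE.inter hmeas.compl, ?_, N, ?_⟩
    · rw [compl_inter, compl_compl]
      refine (measure_union_le _ _).trans ((add_le_add hμ (hmx _ hi)).trans ?_)
      rw [← ENNReal.ofReal_add (by positivity) (by positivity), add_halves]
    · intro m hm n hn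
      have hae : ∀ k, ∀ᵐ x ∂μ, M k (f - u i) x = M k f x - M k (u i) x := by
        intro k
        rw [map_sub]
        exact AEEqFun.coeFn_sub _ _
      filter_upwards [hN m hm n hn, hae m, hae n] with x a b c hx
      have a := a hx.1
      have hx2 : ¬ ∃ n, d < |M n (f - u i) x| := hx.2
      push Not at hx2
      have h1 := hx2 m
      have h2 := hx2 n
      rw [b] at h1
      rw [c] at h2
      rw [abs_le] at *
      constructor <;> linarith
  choose E hE hμ N hN using step
  refine ⟨⋂ j, E j, MeasurableSet.iInter hE, ?_, ?_⟩
  · rw [compl_iInter]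
    refine (measure_iUnion_le _).trans ((ENNReal.tsum_le_tsum hμ).trans ?_)
    have hs : HasSum (fun j : ℕ => ε / 2 / 2 ^ j / 2) (ε / 2) := by
      exact (hasSum_geometric_two' ε).div_const 2
    rw [← ENNReal.ofReal_tsum_of_nonneg (fun j => by positivity) hs.summable, hs.tsum_eq]
    exact ENNReal.ofReal_le_ofReal (by linarith)
  · intro δ hδ
    obtain ⟨j, hj⟩ := exists_nat_one_div_lt (show 0 < δ / 3 by positivity)
    refine ⟨N j, fun m hm n hn => ?_⟩
    filter_upwards [hN j m hm n hn] with x hx hxE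
    have := hx (mem_iInter.1 hxE j)
    linarith
end

section
/- Let (Ω, 𝒜, μ) be a σ-finite measure space, T a positive Dunford–Schwartz operator, and 1 ≤ p < ∞. Then for every f ∈ L^p(μ) the Cesàro averages A_n(f) = (1/n) ∑_{k=0}^{n−1} T^k f converge almost uniformly to some function f̂ ∈ L^p(μ). -/
open MeasureTheory Filter Set ENNReal Topology

variable {Ω : Type*} [MeasurableSpace Ω]

/-- `f` belongs to `L¹(μ) + L^∞(μ)`. -/
def MemL1pLinf (μ : Measure Ω) (f : Ω →ₘ[μ] ℝ) : Prop :=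
  ∃ g h : Ω →ₘ[μ] ℝ, eLpNorm g 1 μ ≠ ∞ ∧ eLpNorm h ⊤ μ ≠ ∞ ∧ f = g + h

/-- A positive Dunford–Schwartz operator: linear and positive on `L¹+L^∞`,
contracting both the `L¹`- and `L^∞`-norms. -/
structure IsPosDS (μ : Measure Ω) (T : (Ω →ₘ[μ] ℝ) → (Ω →ₘ[μ] ℝ)) : Prop where
  map_add : ∀ f g, MemL1pLinf μ f → MemL1pLinf μ g → T (f + g) = T f + T g
  map_smul : ∀ (c : ℝ) (f), MemL1pLinf μ f → T (c • f) = c • T f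
  map_pos : ∀ f, MemL1pLinf μ f → 0 ≤ f → 0 ≤ T f
  norm_one : ∀ f, MemL1pLinf μ f → eLpNorm (T f) 1 μ ≤ eLpNorm f 1 μ
  norm_top : ∀ f, MemL1pLinf μ f → eLpNorm (T f) ⊤ μ ≤ eLpNorm f ⊤ μ

/-- The Cesàro averages `A_n(f) = (1/n) ∑_{k<n} T^k f`. -/
noncomputable def cesaro (μ : Measure Ω) (T : (Ω →ₘ[μ] ℝ) → (Ω →ₘ[μ] ℝ)) (n : ℕ)
    (f : Ω →ₘ[μ] ℝ) : Ω →ₘ[μ] ℝ :=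
  (n : ℝ)⁻¹ • ∑ k ∈ Finset.range n, T^[k] f

/-- `R_μ`: elements of `L¹+L^∞` whose distribution tails are finite. -/
def MemRmu (μ : Measure Ω) (f : Ω →ₘ[μ] ℝ) : Prop :=
  MemL1pLinf μ f ∧ ∀ lam : ℝ, 0 < lam → μ {ω | lam < |f ω|} < ∞

section DSproof

variable {μ : Measure Ω} {T : (Ω →ₘ[μ] ℝ) → (Ω →ₘ[μ] ℝ)}

theorem ds_mem_of_one {f : Ω →ₘ[μ] ℝ} (h : eLpNorm f 1 μ ≠ ∞) : MemL1pLinf μ f :=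
  ⟨f, 0, h, by rw [eLpNorm_congr_ae AEEqFun.coeFn_zero]; simp, by simp⟩

theorem ds_mem_of_top {f : Ω →ₘ[μ] ℝ} (h : eLpNorm f ⊤ μ ≠ ∞) : MemL1pLinf μ f :=
  ⟨0, f, by rw [eLpNorm_congr_ae AEEqFun.coeFn_zero]; simp, h, by simp⟩

theorem ds_eLpNorm_add_le (f g : Ω →ₘ[μ] ℝ) {p : ℝ≥0∞} (hp : 1 ≤ p) :
    eLpNorm (f + g : Ω →ₘ[μ] ℝ) p μ ≤ eLpNorm f p μ + eLpNorm g p μ := by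
  rw [eLpNorm_congr_ae (AEEqFun.coeFn_add f g)]
  exact eLpNorm_add_le f.aestronglyMeasurable g.aestronglyMeasurable hp

theorem ds_eLpNorm_smul (c : ℝ) (f : Ω →ₘ[μ] ℝ) (p : ℝ≥0∞) :
    eLpNorm (c • f : Ω →ₘ[μ] ℝ) p μ = ‖c‖ₑ * eLpNorm f p μ := by
  rw [eLpNorm_congr_ae (AEEqFun.coeFn_smul c f), eLpNorm_const_smul]

theorem ds_mem_add {f g : Ω →ₘ[μ] ℝ} (hf : MemL1pLinf μ f) (hg : MemL1pLinf μ g) :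
    MemL1pLinf μ (f + g) := by
  obtain ⟨a, b, ha, hb, rfl⟩ := hf
  obtain ⟨c, d, hc, hd, rfl⟩ := hg
  refine ⟨a + c, b + d, ?_, ?_, by abel⟩
  · exact ne_top_of_le_ne_top (ENNReal.add_ne_top.2 ⟨ha, hc⟩) (ds_eLpNorm_add_le _ _ le_rfl)
  · exact ne_top_of_le_ne_top (ENNReal.add_ne_top.2 ⟨hb, hd⟩) (ds_eLpNorm_add_le _ _ le_top)

theorem ds_mem_smul (c : ℝ) {f : Ω →ₘ[μ] ℝ} (hf : MemL1pLinf μ f) :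
    MemL1pLinf μ (c • f) := by
  obtain ⟨a, b, ha, hb, rfl⟩ := hf
  refine ⟨c • a, c • b, ?_, ?_, by simp⟩
  · rw [ds_eLpNorm_smul]; exact ENNReal.mul_ne_top (by simp) ha
  · rw [ds_eLpNorm_smul]; exact ENNReal.mul_ne_top (by simp) hb

theorem ds_mem_sub {f g : Ω →ₘ[μ] ℝ} (hf : MemL1pLinf μ f) (hg : MemL1pLinf μ g) :
    MemL1pLinf μ (f - g) := by
  have := ds_mem_add hf (ds_mem_smul (-1) hg)
  simpa [sub_eq_add_neg] using this

theorem ds_mem_zero : MemL1pLinf μ (0 : Ω →ₘ[μ] ℝ) :=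
  ds_mem_of_one (by rw [eLpNorm_congr_ae AEEqFun.coeFn_zero]; simp)

theorem ds_mem_one : MemL1pLinf μ (1 : Ω →ₘ[μ] ℝ) :=
  ds_mem_of_top (by
    rw [eLpNorm_congr_ae AEEqFun.coeFn_one]
    exact (memLp_top_const (1 : ℝ)).2.ne)

theorem ds_mem_sum {ι : Type*} (s : Finset ι) (F : ι → Ω →ₘ[μ] ℝ)
    (h : ∀ i ∈ s, MemL1pLinf μ (F i)) : MemL1pLinf μ (∑ i ∈ s, F i) :=
  Finset.sum_induction F (MemL1pLinf μ) (fun _ _ => ds_mem_add) ds_mem_zero h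

theorem ds_mem_Lp {p : ℝ≥0∞} (hp1 : 1 ≤ p) (hp2 : p ≠ ∞) {f : Ω →ₘ[μ] ℝ}
    (hf : eLpNorm f p μ ≠ ∞) : MemL1pLinf μ f := by
  have hfm : MemLp f p μ := ⟨f.aestronglyMeasurable, hf.lt_top⟩
  have hI := hfm.integrable_norm_rpow (by positivity) hp2
  have hp1' : 1 ≤ p.toReal := by
    rw [← ENNReal.toReal_one]; exact ENNReal.toReal_mono hp2 hp1
  have hs : MeasurableSet {x | 1 < |f x|} := 
    measurableSet_lt measurable_const f.measurable.abs
  have hg : Integrable ({x | 1 < |f x|}.indicator f) μ := by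
    refine hI.mono' (f.aestronglyMeasurable.indicator hs) (ae_of_all _ fun x => ?_)
    by_cases hx : x ∈ {x | 1 < |f x|}
    · rw [indicator_of_mem hx, Real.norm_eq_abs]
      exact Real.self_le_rpow_of_one_le (le_of_lt hx) hp1'
    · rw [indicator_of_notMem hx]; simp; positivity
  refine ⟨AEEqFun.mk _ hg.1, f - AEEqFun.mk _ hg.1, ?_, ?_, by abel⟩
  · rw [eLpNorm_congr_ae (AEEqFun.coeFn_mk _ _)]
    exact (memLp_one_iff_integrable.2 hg).2.ne
  · refine (memLp_top_of_bound (AEEqFun.aestronglyMeasurable _) 1 ?_).2.ne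
    filter_upwards [AEEqFun.coeFn_sub f (AEEqFun.mk _ hg.1), AEEqFun.coeFn_mk _ hg.1] with x h1 h2
    rw [h1, Pi.sub_apply, h2]
    by_cases hx : x ∈ {x | 1 < |f x|}
    · rw [indicator_of_mem hx]; simp
    · rw [indicator_of_notMem hx]; simpa using hx

theorem IsPosDS.mem (hT : IsPosDS μ T) {f : Ω →ₘ[μ] ℝ} (hf : MemL1pLinf μ f) :
    MemL1pLinf μ (T f) := by
  obtain ⟨a, b, ha, hb, rfl⟩ := hf
  have ha' := ds_mem_of_one ha
  have hb' := ds_mem_of_top hb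
  exact ⟨T a, T b, ne_top_of_le_ne_top ha (hT.norm_one a ha'),
    ne_top_of_le_ne_top hb (hT.norm_top b hb'), hT.map_add a b ha' hb'⟩

theorem IsPosDS.zero (hT : IsPosDS μ T) : T 0 = 0 := by
  simpa using hT.map_smul 0 0 ds_mem_zero

theorem IsPosDS.sub (hT : IsPosDS μ T) {f g : Ω →ₘ[μ] ℝ} (hf : MemL1pLinf μ f)
    (hg : MemL1pLinf μ g) : T (f - g) = T f - T g := by
  have h := hT.map_add (f - g) g (ds_mem_sub hf hg) hg
  rw [sub_add_cancel] at h
  rw [h]; abel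

theorem IsPosDS.iter (hT : IsPosDS μ T) (k : ℕ) : IsPosDS μ (T^[k]) := by
  induction k with
  | zero => constructor <;> intros <;> simp_all
  | succ k ih =>
    constructor
    · intro f g hf hg
      simp only [Function.iterate_succ', Function.comp]
      rw [ih.map_add f g hf hg, hT.map_add _ _ (ih.mem hf) (ih.mem hg)]
    · intro c f hf
      simp only [Function.iterate_succ', Function.comp]
      rw [ih.map_smul c f hf, hT.map_smul _ _ (ih.mem hf)]
    · intro f hf h0
      simp only [Function.iterate_succ', Function.comp]
      exact hT.map_pos _ (ih.mem hf) (ih.map_pos _ hf h0)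
    · intro f hf
      simp only [Function.iterate_succ', Function.comp]
      exact (hT.norm_one _ (ih.mem hf)).trans (ih.norm_one _ hf)
    · intro f hf
      simp only [Function.iterate_succ', Function.comp]
      exact (hT.norm_top _ (ih.mem hf)).trans (ih.norm_top _ hf)

theorem ds_eLpNorm_avg {p : ℝ≥0∞} (hp : 1 ≤ p) (n : ℕ) (F : ℕ → Ω →ₘ[μ] ℝ) (C : ℝ≥0∞)
    (h : ∀ k, eLpNorm (F k) p μ ≤ C) :
    eLpNorm ((n : ℝ)⁻¹ • ∑ k ∈ Finset.range n, F k : Ω →ₘ[μ] ℝ) p μ ≤ C := by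
  rw [ds_eLpNorm_smul]
  have h2 : eLpNorm (∑ k ∈ Finset.range n, F k : Ω →ₘ[μ] ℝ) p μ ≤ n * C := by
    induction n with
    | zero => simp only [Finset.range_zero, Finset.sum_empty]
              rw [eLpNorm_congr_ae AEEqFun.coeFn_zero]; simp
    | succ n ih =>
      rw [Finset.sum_range_succ]
      refine (ds_eLpNorm_add_le _ _ hp).trans ?_
      push_cast
      rw [add_mul, one_mul]
      exact add_le_add ih (h n)
  rcases Nat.eq_zero_or_pos n with rfl | hn
  · simp
  calc _ ≤ ‖(n : ℝ)⁻¹‖ₑ * (n * C) := by gcongr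
    _ = C := by
      rw [← mul_assoc, enorm_inv (by positivity), Real.enorm_natCast,
        ENNReal.inv_mul_cancel (by simp; omega) (by simp), one_mul]

instance ds_ordered : IsOrderedAddMonoid (Ω →ₘ[μ] ℝ) where
  add_le_add_left a b h c := by
    rw [← AEEqFun.coeFn_le] at h ⊢
    filter_upwards [h, AEEqFun.coeFn_add a c, AEEqFun.coeFn_add b c] with x h1 h2 h3
    rw [h2, h3]; simpa using h1

theorem ds_smul_nonneg {c : ℝ} (hc : 0 ≤ c) {f : Ω →ₘ[μ] ℝ} (hf : 0 ≤ f) : 0 ≤ c • f := by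
  rw [← AEEqFun.coeFn_le] at hf ⊢
  filter_upwards [hf, AEEqFun.coeFn_smul c f, AEEqFun.coeFn_zero (μ := μ) (β := ℝ)] with x h1 h2 h3
  rw [h3] at h1 ⊢; rw [h2]; exact mul_nonneg hc h1

theorem IsPosDS.ces (hT : IsPosDS μ T) (n : ℕ) : IsPosDS μ (cesaro μ T n) := by
  constructor
  · intro f g hf hg
    simp only [cesaro]
    rw [← smul_add, ← Finset.sum_add_distrib]
    congr 1
    exact Finset.sum_congr rfl fun k _ => (hT.iter k).map_add f g hf hg
  · intro c f hf
    simp only [cesaro]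
    rw [Finset.sum_congr rfl fun k _ => (hT.iter k).map_smul c f hf, ← Finset.smul_sum, smul_comm]
  · intro f hf h0
    exact ds_smul_nonneg (by positivity)
      (Finset.sum_nonneg fun k _ => (hT.iter k).map_pos f hf h0)
  · intro f hf
    exact ds_eLpNorm_avg le_rfl n _ _ fun k => (hT.iter k).norm_one f hf
  · intro f hf
    exact ds_eLpNorm_avg le_top n _ _ fun k => (hT.iter k).norm_top f hf

theorem IsPosDS.mono (hT : IsPosDS μ T) {f g : Ω →ₘ[μ] ℝ} (hf : MemL1pLinf μ f)
    (hg : MemL1pLinf μ g) (h : f ≤ g) : T f ≤ T g := by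
  have := hT.map_pos (g - f) (ds_mem_sub hg hf) (sub_nonneg.2 h)
  rw [hT.sub hg hf] at this
  exact sub_nonneg.1 this

theorem IsPosDS.one_le (hT : IsPosDS μ T) : ∀ᵐ x ∂μ, (T 1) x ≤ 1 := by
  have h := hT.norm_top 1 ds_mem_one
  rw [eLpNorm_congr_ae (AEEqFun.coeFn_one (μ := μ))] at h
  have h1 : eLpNorm (1 : Ω → ℝ) ⊤ μ ≤ 1 := by
    rw [eLpNorm_exponent_top]
    exact eLpNormEssSup_le_of_ae_enorm_bound (by simp)
  filter_upwards [enorm_ae_le_eLpNormEssSup (T 1) μ] with x hx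
  rw [← eLpNorm_exponent_top] at hx
  have h3 := hx.trans (h.trans h1)
  have h4 : ‖(T 1) x‖ ≤ 1 := by
    rw [enorm_eq_nnnorm] at h3
    exact_mod_cast h3
  exact (le_abs_self _).trans h4

theorem IsPosDS.key (hT : IsPosDS μ T) {h g : Ω →ₘ[μ] ℝ} (hh : MemL1pLinf μ h)
    (hg : MemL1pLinf μ g) {c : ℝ} (hc : 0 ≤ c) (H : ∀ᵐ x ∂μ, h x ≤ g x + c) :
    ∀ᵐ x ∂μ, (T h) x ≤ (T g) x + c := by
  have h1 : h ≤ g + c • 1 := by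
    rw [← AEEqFun.coeFn_le]
    filter_upwards [H, AEEqFun.coeFn_add g (c • 1), AEEqFun.coeFn_smul c (1 : Ω →ₘ[μ] ℝ),
      AEEqFun.coeFn_one (μ := μ) (β := ℝ)] with x a1 a2 a3 a4
    rw [a2, Pi.add_apply, a3, Pi.smul_apply, a4]; simpa using a1
  have h2 := hT.mono hh (ds_mem_add hg (ds_mem_smul c ds_mem_one)) h1
  rw [hT.map_add _ _ hg (ds_mem_smul c ds_mem_one), hT.map_smul _ _ ds_mem_one,
    ← AEEqFun.coeFn_le] at h2
  filter_upwards [h2, AEEqFun.coeFn_add (T g) (c • T 1), AEEqFun.coeFn_smul c (T 1),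
    hT.one_le] with x a1 a2 a3 a4
  rw [a2, Pi.add_apply, a3, Pi.smul_apply, smul_eq_mul] at a1
  nlinarith [mul_le_mul_of_nonneg_left a4 hc]

theorem IsPosDS.contr (hT : IsPosDS μ T) {p : ℝ≥0∞} (hp1 : 1 ≤ p) (hp2 : p ≠ ∞)
    {f : Ω →ₘ[μ] ℝ} (hf : eLpNorm f p μ ≠ ∞) : eLpNorm (T f) p μ ≤ eLpNorm f p μ := by
  have hm := ds_mem_Lp hp1 hp2 hf
  rcases eq_or_lt_of_le hp1 with rfl | hp
  · exact hT.norm_one f hm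
  have hfm : MemLp f p μ := ⟨f.aestronglyMeasurable, hf.lt_top⟩
  have hp0 : p ≠ 0 := by positivity
  have hI := hfm.integrable_norm_rpow hp0 hp2
  set r := p.toReal with hr
  have hr1 : 1 < r := by
    rw [hr, ← ENNReal.toReal_one]; exact (ENNReal.toReal_lt_toReal (by simp) hp2).2 hp
  have hr0 : 0 < r := by linarith
  obtain ⟨q, hq⟩ : ∃ q, r.HolderConjugate q := ⟨_, Real.HolderConjugate.conjExponent hr1⟩
  have hq0 : 0 < q := hq.symm.pos
  set G : Ω →ₘ[μ] ℝ := AEEqFun.mk _ hI.1 with hG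
  have hGae : G =ᵐ[μ] fun x => ‖f x‖ ^ r := AEEqFun.coeFn_mk _ _
  have hG1 : eLpNorm G 1 μ = ∫⁻ x, ‖f x‖ₑ ^ r ∂μ := by
    rw [eLpNorm_congr_ae hGae, eLpNorm_one_eq_lintegral_enorm]
    refine lintegral_congr fun x => ?_
    rw [Real.enorm_rpow_of_nonneg (norm_nonneg _) hr0.le, enorm_norm]
  have hGm : MemL1pLinf μ G := ds_mem_of_one (by
    rw [eLpNorm_congr_ae hGae]; exact (memLp_one_iff_integrable.2 hI).2.ne)
  have hb : ∀ b : ℝ, ∀ᵐ x ∂μ, b * (T f) x ≤ r⁻¹ * (T G) x + |b| ^ q / q := by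
    intro b
    have := hT.key (h := b • f) (g := r⁻¹ • G) (ds_mem_smul b hm) (ds_mem_smul _ hGm)
      (c := |b| ^ q / q) (by positivity) (by
        filter_upwards [hGae, AEEqFun.coeFn_smul b f, AEEqFun.coeFn_smul r⁻¹ G] with x h1 h2 h3
        rw [h2, h3, Pi.smul_apply, Pi.smul_apply, h1, smul_eq_mul, smul_eq_mul]
        have := Real.young_inequality (f x) b hq
        rw [Real.norm_eq_abs, mul_comm b, ← div_eq_inv_mul]
        exact this)
    rw [hT.map_smul _ _ hm, hT.map_smul _ _ hGm] at this
    filter_upwards [this, AEEqFun.coeFn_smul b (T f), AEEqFun.coeFn_smul r⁻¹ (T G)] with x h1 h2 h3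
    rw [h2, h3] at h1
    exact h1
  have hb2 : ∀ᵐ x ∂μ, ∀ b : ℚ, b * (T f) x ≤ r⁻¹ * (T G) x + |(b : ℝ)| ^ q / q :=
    ae_all_iff.2 fun b => hb b
  have hmain : ∀ᵐ x ∂μ, |(T f) x| ^ r ≤ (T G) x := by
    filter_upwards [hb2] with x hx
    have hx' : ∀ b : ℝ, b * (T f) x ≤ r⁻¹ * (T G) x + |b| ^ q / q := by
      have hc : IsClosed {b : ℝ | b * (T f) x ≤ r⁻¹ * (T G) x + |b| ^ q / q} := by
        refine isClosed_le (by fun_prop) ?_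
        have : Continuous fun b : ℝ => |b| ^ q :=
          (continuous_abs).rpow_const fun _ => Or.inr hq0.le
        fun_prop
      intro b
      exact hc.closure_subset_iff.2 (by rintro _ ⟨b, rfl⟩; exact hx b)
        (Rat.denseRange_cast (𝕜 := ℝ) b)
    set y := (T f) x
    obtain ⟨b, hb1, hb2⟩ : ∃ b : ℝ, b * y = |y| ^ r ∧ |b| ^ q = |y| ^ r := by
      have e1 : |y| ^ (r - 1) * |y| = |y| ^ r := by
        rcases eq_or_ne y 0 with h | h
        · rw [h]; simp; rw [Real.zero_rpow hr0.ne']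
        · rw [← Real.rpow_add_one (abs_ne_zero.2 h)]; ring_nf
      have e2 : (|y| ^ (r - 1)) ^ q = |y| ^ r := by
        rw [← Real.rpow_mul (abs_nonneg _), hq.sub_one_mul_conj]
      have e3 : 0 ≤ |y| ^ (r - 1) := by positivity
      rcases le_total 0 y with h | h
      · refine ⟨|y| ^ (r - 1), ?_, ?_⟩
        · rw [← e1, abs_of_nonneg h]
        · rw [abs_of_nonneg e3, e2]
      · refine ⟨-|y| ^ (r - 1), ?_, ?_⟩
        · rw [← e1, abs_of_nonpos h]; ring
        · rw [abs_neg, abs_of_nonneg e3, e2]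
    have h3 := hx' b
    rw [hb1, hb2] at h3
    have h4 : r⁻¹ + q⁻¹ = 1 := hq.inv_add_inv_eq_one
    have h5 : r⁻¹ * |y| ^ r ≤ r⁻¹ * (T G) x := by
      have : |y| ^ r = r⁻¹ * |y| ^ r + |y| ^ r / q := by
        rw [div_eq_inv_mul, ← add_mul, h4, one_mul]
      linarith
    exact le_of_mul_le_mul_left h5 (by positivity)
  rw [eLpNorm_eq_lintegral_rpow_enorm_toReal hp0 hp2, eLpNorm_eq_lintegral_rpow_enorm_toReal hp0 hp2]
  refine ENNReal.rpow_le_rpow ?_ (by positivity)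
  rw [← hr, ← hG1]
  refine le_trans ?_ (hT.norm_one G hGm)
  rw [eLpNorm_one_eq_lintegral_enorm]
  refine lintegral_mono_ae ?_
  filter_upwards [hmain] with x hx
  rw [← enorm_norm ((T f) x), ← Real.enorm_rpow_of_nonneg (norm_nonneg _) hr0.le,
    Real.norm_eq_abs]
  rw [Real.enorm_eq_ofReal (by positivity)]
  exact (ENNReal.ofReal_le_ofReal (hx.trans (le_abs_self _))).trans_eq (Real.enorm_eq_ofReal_abs _).symm

theorem ds_int_of_one {f : Ω →ₘ[μ] ℝ} (h : eLpNorm f 1 μ ≠ ∞) : Integrable f μ :=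
  memLp_one_iff_integrable.1 ⟨f.aestronglyMeasurable, h.lt_top⟩

theorem ds_one_of_int {f : Ω →ₘ[μ] ℝ} (h : Integrable f μ) : eLpNorm f 1 μ ≠ ∞ :=
  (memLp_one_iff_integrable.2 h).2.ne

theorem IsPosDS.integral_le (hT : IsPosDS μ T) {f : Ω →ₘ[μ] ℝ} (hf : Integrable f μ)
    (h0 : 0 ≤ f) : ∫ x, (T f) x ∂μ ≤ ∫ x, f x ∂μ := by
  have hm := ds_mem_of_one (ds_one_of_int hf)
  have h1 := hT.norm_one f hm
  have e : ∀ g : Ω →ₘ[μ] ℝ, 0 ≤ g → ∫ x, g x ∂μ = (eLpNorm g 1 μ).toReal := by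
    intro g hg
    rw [eLpNorm_one_eq_lintegral_enorm, ← integral_norm_eq_lintegral_enorm g.aestronglyMeasurable]
    refine integral_congr_ae ?_
    rw [← AEEqFun.coeFn_le] at hg
    filter_upwards [hg, AEEqFun.coeFn_zero (μ := μ) (β := ℝ)] with x a1 a2
    rw [a2] at a1
    exact (abs_of_nonneg a1).symm
  rw [e _ h0, e _ (hT.map_pos f hm h0)]
  exact ENNReal.toReal_mono (ds_one_of_int hf) h1

theorem IsPosDS.int (hT : IsPosDS μ T) {f : Ω →ₘ[μ] ℝ} (hf : Integrable f μ) :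
    Integrable (T f) μ :=
  ds_int_of_one (ne_top_of_le_ne_top (ds_one_of_int hf)
    (hT.norm_one f (ds_mem_of_one (ds_one_of_int hf))))

theorem IsPosDS.sum (hT : IsPosDS μ T) {ι : Type*} (s : Finset ι) (F : ι → Ω →ₘ[μ] ℝ)
    (h : ∀ i ∈ s, MemL1pLinf μ (F i)) : T (∑ i ∈ s, F i) = ∑ i ∈ s, T (F i) := by
  classical
  induction s using Finset.induction_on with
  | empty => simp [hT.zero]
  | insert a s ha ih =>
    rw [Finset.sum_insert ha, Finset.sum_insert ha, hT.map_add, ih]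
    · exact fun i hi => h i (Finset.mem_insert_of_mem hi)
    · exact h a (Finset.mem_insert_self _ _)
    · exact ds_mem_sum _ _ fun i hi => h i (Finset.mem_insert_of_mem hi)

theorem IsPosDS.hopf (hT : IsPosDS μ T) {f : Ω →ₘ[μ] ℝ} (hf : Integrable f μ) (N : ℕ) :
    0 ≤ ∫ x in {x | 0 < (partialSups (fun k => ∑ j ∈ Finset.range k, T^[j] f) N) x}, f x ∂μ := by
  set S : ℕ → Ω →ₘ[μ] ℝ := fun k => ∑ j ∈ Finset.range k, T^[j] f with hS
  have hfm := ds_mem_of_one (ds_one_of_int hf)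
  have hSi : ∀ k, Integrable (S k) μ := by
    intro k
    rw [integrable_congr (AEEqFun.coeFn_finsetSum _ _)]
    exact integrable_finsetSum' _ fun j _ => (hT.iter j).int hf
  have hMi : ∀ n, Integrable (partialSups S n) μ := by
    intro n
    induction n with
    | zero => rw [partialSups_zero]; exact hSi 0
    | succ n ih =>
      rw [partialSups_add_one, integrable_congr (AEEqFun.coeFn_sup _ _)]
      exact ih.sup (hSi _)
  have hS1 : ∀ k, S (k + 1) = f + T (S k) := by
    intro k
    simp only [hS]
    rw [hT.sum _ _ fun j _ => (hT.iter j).mem hfm, Finset.sum_range_succ', add_comm]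
    simp only [Function.iterate_succ', Function.comp, Function.iterate_zero, id]
  set M := partialSups S N with hM
  have hMm := ds_mem_of_one (ds_one_of_int (hMi N))
  have hM0 : 0 ≤ M := by
    have : S 0 ≤ M := le_partialSups_of_le S (Nat.zero_le N)
    simpa [hS] using this
  have hTM0 := hT.map_pos M hMm hM0
  have hle : M ≤ 0 ⊔ (f + T M) := by
    refine partialSups_le S N _ fun j hj => ?_
    rcases j with _ | j
    · simp [hS]
    · refine le_trans ?_ le_sup_right
      rw [hS1]
      have := hT.mono (ds_mem_of_one (ds_one_of_int (hSi j))) hMm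
        (le_partialSups_of_le S (by omega : j ≤ N))
      gcongr
  have hMint : Integrable M μ := hMi N
  have hTMint : Integrable (T M) μ := hT.int hMint
  have hE : MeasurableSet {x | 0 < M x} := measurableSet_lt measurable_const M.measurable
  rw [← AEEqFun.coeFn_le] at hle hM0 hTM0
  have h1 : ∫ x in {x | 0 < M x}, (M x - (T M) x) ∂μ ≤ ∫ x in {x | 0 < M x}, f x ∂μ := by
    refine setIntegral_mono_on_ae (hMint.sub hTMint).integrableOn hf.integrableOn hE ?_
    filter_upwards [hle, AEEqFun.coeFn_sup 0 (f + T M), AEEqFun.coeFn_add f (T M),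
      AEEqFun.coeFn_zero (μ := μ) (β := ℝ)] with x a1 a2 a3 a4 hx
    rw [a2, a3, a4] at a1
    have hx : 0 < M x := hx
    rcases le_max_iff.1 a1 with h | h
    · simp at h; linarith
    · simp at h; linarith
  refine le_trans ?_ h1
  rw [integral_sub hMint.integrableOn hTMint.integrableOn]
  have h2 : ∫ x in {x | 0 < M x}, M x ∂μ = ∫ x, M x ∂μ := by
    rw [← integral_indicator hE]
    refine integral_congr_ae ?_
    filter_upwards [hM0, AEEqFun.coeFn_zero (μ := μ) (β := ℝ)] with x a1 a2
    rw [a2] at a1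
    by_cases hx : x ∈ {x | 0 < M x}
    · exact indicator_of_mem hx _
    · rw [indicator_of_notMem hx]
      exact le_antisymm a1 (not_lt.1 hx)
  have h3 : ∫ x in {x | 0 < M x}, (T M) x ∂μ ≤ ∫ x, (T M) x ∂μ := by
    refine setIntegral_le_integral hTMint ?_
    filter_upwards [hTM0, AEEqFun.coeFn_zero (μ := μ) (β := ℝ)] with x a1 a2
    rw [a2] at a1; exact a1
  have h4 := hT.integral_le hMint (by rw [← AEEqFun.coeFn_le]; exact hM0)
  linarith

theorem ds_ae_le {f g : Ω →ₘ[μ] ℝ} (h : f ≤ g) : ∀ᵐ x ∂μ, f x ≤ g x := AEEqFun.coeFn_le.2 h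

theorem IsPosDS.weak_fin (hT : IsPosDS μ T) {g : Ω →ₘ[μ] ℝ} (hg : Integrable g μ) (h0 : 0 ≤ g)
    {l : ℝ} (hl : 0 < l) (N : ℕ) {B : Set Ω} (hB : MeasurableSet B) (hBf : μ B ≠ ∞)
    (hBN : ∀ x ∈ B, ∃ n ≤ N, l < (cesaro μ T n g) x) :
    ENNReal.ofReal l * μ B ≤ eLpNorm g 1 μ := by
  have hui : Integrable (B.indicator fun _ => (1 : ℝ)) μ :=
    (integrable_indicator_iff hB).2 (integrableOn_const hBf)
  set u : Ω →ₘ[μ] ℝ := AEEqFun.mk _ hui.1 with hu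
  have huae : u =ᵐ[μ] B.indicator fun _ => (1 : ℝ) := AEEqFun.coeFn_mk _ _
  have hui' : Integrable u μ := (integrable_congr huae).2 hui
  set f := g - l • u with hf
  have hfae : f =ᵐ[μ] fun x => g x - l * u x := by
    filter_upwards [AEEqFun.coeFn_sub g (l • u), AEEqFun.coeFn_smul l u] with x a1 a2
    rw [a1, Pi.sub_apply, a2]; rfl
  have hfi : Integrable f μ := (integrable_congr hfae).2 (hg.sub (hui'.const_mul l))
  have H := hT.hopf hfi N
  set S : ℕ → Ω →ₘ[μ] ℝ := fun k => ∑ j ∈ Finset.range k, T^[j] f with hS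
  set M := partialSups S N with hM
  have hgm := ds_mem_of_one (ds_one_of_int hg)
  have hum := ds_mem_of_one (ds_one_of_int hui')
  have hSM : ∀ᵐ x ∂μ, ∀ n, n ≤ N → S n x ≤ M x := by
    rw [ae_all_iff]; intro n
    by_cases hn : n ≤ N
    · filter_upwards [ds_ae_le (le_partialSups_of_le S hn)] with x hx _ using hx
    · exact ae_of_all _ fun x h => absurd h hn
  have hcf : ∀ᵐ x ∂μ, ∀ n, (cesaro μ T n g) x - l ≤ (n : ℝ)⁻¹ * S n x := by
    rw [ae_all_iff]; intro n
    have h1 : cesaro μ T n f = cesaro μ T n g - l • cesaro μ T n u := by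
      rw [hf, (hT.ces n).sub hgm (ds_mem_smul l hum), (hT.ces n).map_smul l u hum]
    have h2 := (hT.ces n).key hum ds_mem_zero (c := 1) zero_le_one (by
      filter_upwards [huae, AEEqFun.coeFn_zero (μ := μ) (β := ℝ)] with x a1 a2
      rw [a1, a2]
      by_cases hx : x ∈ B <;> simp [hx])
    rw [(hT.ces n).zero] at h2
    have h3 : cesaro μ T n f = (n : ℝ)⁻¹ • S n := rfl
    rw [h1] at h3
    have h4 := AEEqFun.coeFn_smul (n : ℝ)⁻¹ (S n)
    rw [← h3] at h4
    filter_upwards [h2, h4, AEEqFun.coeFn_sub (cesaro μ T n g) (l • cesaro μ T n u),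
      AEEqFun.coeFn_smul l (cesaro μ T n u), AEEqFun.coeFn_zero (μ := μ) (β := ℝ)] with x a1 a2 a3 a4 a5
    rw [a3, Pi.sub_apply, a4, Pi.smul_apply, Pi.smul_apply, smul_eq_mul, smul_eq_mul] at a2
    rw [a5] at a1
    rw [← a2]
    have : (cesaro μ T n u) x ≤ 1 := by simpa using a1
    nlinarith
  have hBM : ∀ᵐ x ∂μ, x ∈ B → x ∈ {x | 0 < M x} := by
    filter_upwards [hSM, hcf] with x a1 a2 hx
    obtain ⟨n, hn, hxn⟩ := hBN x hx
    have h1 := a1 n hn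
    have h2 := a2 n
    have h3 : 0 < (n : ℝ)⁻¹ * S n x := by linarith
    exact lt_of_lt_of_le (pos_of_mul_pos_right h3 (by positivity)) h1
  have hE : MeasurableSet {x | 0 < M x} := measurableSet_lt measurable_const M.measurable
  have e1 : ∫ x in {x | 0 < M x}, f x ∂μ =
      ∫ x in {x | 0 < M x}, g x ∂μ - l * ∫ x in {x | 0 < M x}, u x ∂μ := by
    rw [setIntegral_congr_ae hE (hfae.mono fun x hx _ => hx),
      integral_sub hg.integrableOn (hui'.const_mul l).integrableOn, integral_const_mul]
  have e2 : ∫ x in {x | 0 < M x}, u x ∂μ = μ.real B := by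
    rw [← integral_indicator hE]
    have : {x | 0 < M x}.indicator u =ᵐ[μ] B.indicator fun _ => (1 : ℝ) := by
      filter_upwards [huae, hBM] with x a1 a2
      by_cases hx : x ∈ {x | 0 < M x}
      · rw [indicator_of_mem hx, a1]
      · rw [indicator_of_notMem hx, indicator_of_notMem fun h => hx (a2 h)]
    rw [integral_congr_ae this, integral_indicator hB]
    simp
  have e3 : ∫ x in {x | 0 < M x}, g x ∂μ ≤ ∫ x, g x ∂μ := by
    refine setIntegral_le_integral hg ?_
    filter_upwards [ds_ae_le h0, AEEqFun.coeFn_zero (μ := μ) (β := ℝ)] with x a1 a2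
    rw [a2] at a1; exact a1
  rw [e1, e2] at H
  have e4 : l * μ.real B ≤ ∫ x, g x ∂μ := by linarith
  have e5 : ∫ x, g x ∂μ ≤ (eLpNorm g 1 μ).toReal := by
    rw [eLpNorm_one_eq_lintegral_enorm, ← integral_norm_eq_lintegral_enorm g.aestronglyMeasurable]
    exact integral_mono hg hg.norm fun x => le_abs_self _
  have e6 := ENNReal.ofReal_le_ofReal (e4.trans e5)
  rwa [ENNReal.ofReal_toReal (ds_one_of_int hg), ENNReal.ofReal_mul hl.le,
    ofReal_measureReal hBf] at e6

theorem IsPosDS.weak [SigmaFinite μ] (hT : IsPosDS μ T) {g : Ω →ₘ[μ] ℝ} (hg : Integrable g μ)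
    (h0 : 0 ≤ g) {l : ℝ} (hl : 0 < l) :
    ENNReal.ofReal l * μ {x | ∃ n, l < (cesaro μ T n g) x} ≤ eLpNorm g 1 μ := by
  set B : ℕ → Set Ω := fun N => spanningSets μ N ∩ {x | ∃ n ≤ N, l < (cesaro μ T n g) x} with hB
  have hBm : ∀ N, MeasurableSet (B N) := by
    intro N
    refine (measurableSet_spanningSets μ N).inter ?_
    have : {x | ∃ n ≤ N, l < (cesaro μ T n g) x} =
        ⋃ n, ⋃ (_ : n ≤ N), {x | l < (cesaro μ T n g) x} := by ext x; simp
    rw [this]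
    exact MeasurableSet.iUnion fun n => MeasurableSet.iUnion fun _ =>
      measurableSet_lt measurable_const (AEEqFun.measurable _)
  have hmono : Monotone B := by
    intro a b hab x hx
    obtain ⟨h1, n, hn, h2⟩ := hx
    exact ⟨monotone_spanningSets μ hab h1, n, hn.trans hab, h2⟩
  have hU : {x | ∃ n, l < (cesaro μ T n g) x} = ⋃ N, B N := by
    ext x
    simp only [mem_iUnion]
    constructor
    · rintro ⟨n, hn⟩
      obtain ⟨k, hk⟩ : ∃ k, x ∈ spanningSets μ k := by
        have : x ∈ ⋃ k, spanningSets μ k := by rw [iUnion_spanningSets]; trivial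
        exact mem_iUnion.1 this
      exact ⟨max n k, monotone_spanningSets μ (le_max_right _ _) hk, n, le_max_left _ _, hn⟩
    · rintro ⟨N, _, n, _, h⟩
      exact ⟨n, h⟩
  rw [hU, hmono.measure_iUnion, ENNReal.mul_iSup]
  refine iSup_le fun N => hT.weak_fin hg h0 hl N (hBm N) ?_ fun x hx => hx.2
  exact ((measure_mono inter_subset_left).trans_lt (measure_spanningSets_lt_top μ N)).ne

theorem IsPosDS.maxLp [SigmaFinite μ] (hT : IsPosDS μ T) {p : ℝ≥0∞} (hp1 : 1 ≤ p) (hp2 : p ≠ ∞)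
    {h : Ω →ₘ[μ] ℝ} (hh : eLpNorm h p μ ≠ ∞) {l : ℝ} (hl : 0 < l) :
    ENNReal.ofReal l * μ {x | ∃ n, 2 * l < |(cesaro μ T n h) x|} ≤
      ENNReal.ofReal (l ^ (1 - p.toReal)) * eLpNorm h p μ ^ p.toReal := by
  have hm := ds_mem_Lp hp1 hp2 hh
  have hfm : MemLp h p μ := ⟨h.aestronglyMeasurable, hh.lt_top⟩
  have hp0 : p ≠ 0 := by positivity
  have hI := hfm.integrable_norm_rpow hp0 hp2
  set r := p.toReal with hr
  have hr1 : 1 ≤ r := by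
    rw [hr, ← ENNReal.toReal_one]; exact ENNReal.toReal_mono hp2 hp1
  have hr0 : 0 < r := by linarith
  have hpt : ∀ x, max (|h x| - l) 0 ≤ l ^ (1 - r) * ‖h x‖ ^ r := by
    intro x
    refine max_le ?_ (by positivity)
    rcases le_total (|h x|) l with h1 | h1
    · have : 0 ≤ l ^ (1 - r) * ‖h x‖ ^ r := by positivity
      linarith
    · have hx : 0 < |h x| := by linarith
      have h2 : |h x| ^ (1 - r) ≤ l ^ (1 - r) :=
        Real.rpow_le_rpow_of_nonpos hl h1 (by linarith)
      have h3 : |h x| ^ (1 - r) * |h x| ^ r = |h x| := by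
        rw [← Real.rpow_add hx]; simp
      have h4 : |h x| ^ (1 - r) * |h x| ^ r ≤ l ^ (1 - r) * |h x| ^ r := by gcongr
      rw [Real.norm_eq_abs]; linarith
  have hgi : Integrable (fun x => max (|h x| - l) 0) μ := by
    refine (hI.const_mul (l ^ (1 - r))).mono' ?_ (ae_of_all _ fun x => ?_)
    · exact (((h.measurable.abs).sub_const l).max measurable_const).aestronglyMeasurable
    · rw [Real.norm_eq_abs, abs_of_nonneg (le_max_right _ _)]; exact hpt x
  set g : Ω →ₘ[μ] ℝ := AEEqFun.mk _ hgi.1 with hg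
  have hgae : g =ᵐ[μ] fun x => max (|h x| - l) 0 := AEEqFun.coeFn_mk _ _
  have hgi' : Integrable g μ := (integrable_congr hgae).2 hgi
  have hgm := ds_mem_of_one (ds_one_of_int hgi')
  have hg0 : 0 ≤ g := by
    rw [← AEEqFun.coeFn_le]
    filter_upwards [hgae, AEEqFun.coeFn_zero (μ := μ) (β := ℝ)] with x a1 a2
    rw [a1, a2]; exact le_max_right _ _
  have hbd : ∀ᵐ x ∂μ, ∀ n, |(cesaro μ T n h) x| ≤ (cesaro μ T n g) x + l := by
    rw [ae_all_iff]; intro n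
    have h1 := (hT.ces n).key hm hgm hl.le (by
      filter_upwards [hgae] with x a1
      rw [a1]; linarith [le_max_left (|h x| - l) 0, le_abs_self (h x)])
    have h2 := (hT.ces n).key (ds_mem_smul (-1) hm) hgm hl.le (by
      filter_upwards [hgae, AEEqFun.coeFn_smul (-1 : ℝ) h] with x a1 a2
      rw [a1, a2, Pi.smul_apply, smul_eq_mul]
      linarith [le_max_left (|h x| - l) 0, neg_le_abs (h x)])
    rw [(hT.ces n).map_smul _ _ hm] at h2
    filter_upwards [h1, h2, AEEqFun.coeFn_smul (-1 : ℝ) (cesaro μ T n h)] with x a1 a2 a3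
    rw [a3, Pi.smul_apply, smul_eq_mul] at a2
    exact abs_le.2 ⟨by linarith, a1⟩
  calc _ ≤ ENNReal.ofReal l * μ {x | ∃ n, l < (cesaro μ T n g) x} := by
        gcongr 1
        refine measure_mono_ae ?_
        filter_upwards [hbd] with x a1 hx
        obtain ⟨n, hn⟩ := hx
        exact ⟨n, by linarith [a1 n]⟩
    _ ≤ eLpNorm g 1 μ := hT.weak hgi' hg0 hl
    _ ≤ ENNReal.ofReal (l ^ (1 - r)) * ∫⁻ x, ‖h x‖ₑ ^ r ∂μ := by
        rw [eLpNorm_congr_ae hgae, eLpNorm_one_eq_lintegral_enorm, ← lintegral_const_mul']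
        · refine lintegral_mono fun x => ?_
          rw [Real.enorm_eq_ofReal (le_max_right _ _)]
          refine (ENNReal.ofReal_le_ofReal (hpt x)).trans_eq ?_
          rw [ENNReal.ofReal_mul (by positivity),
            ← Real.enorm_eq_ofReal (show 0 ≤ ‖h x‖ ^ r by positivity),
            Real.enorm_rpow_of_nonneg (norm_nonneg _) hr0.le, enorm_norm]
        · simp
    _ = _ := by
        rw [eLpNorm_eq_lintegral_rpow_enorm_toReal hp0 hp2, ← ENNReal.rpow_mul, ← hr,
          one_div, inv_mul_cancel₀ hr0.ne', ENNReal.rpow_one]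

theorem IsPosDS.max_small [SigmaFinite μ] (hT : IsPosDS μ T) {p : ℝ≥0∞} (hp1 : 1 ≤ p)
    (hp2 : p ≠ ∞) {l : ℝ} (hl : 0 < l) {δ : ℝ≥0∞} (hδ : δ ≠ 0) :
    ∃ η : ℝ≥0∞, η ≠ 0 ∧ ∀ h : Ω →ₘ[μ] ℝ, eLpNorm h p μ ≤ η →
      μ {x | ∃ n, l < |(cesaro μ T n h) x|} ≤ δ := by
  wlog hδt : δ ≠ ∞ generalizing δ
  · obtain ⟨η, h1, h2⟩ := this (δ := 1) (by simp) (by simp)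
    refine ⟨η, h1, fun h hh => ?_⟩
    rw [not_not.1 hδt]; exact le_top
  have hr0 : 0 < p.toReal := ENNReal.toReal_pos (by positivity) hp2
  set r := p.toReal with hr
  set a := ENNReal.ofReal (l / 2) with ha
  set b := ENNReal.ofReal ((l / 2) ^ (1 - r)) with hb
  have ha0 : a ≠ 0 := by rw [ha]; simp; linarith
  have hb0 : b ≠ 0 := by
    rw [hb]; simp only [ne_eq, ENNReal.ofReal_eq_zero, not_le]; positivity
  have hat : a ≠ ∞ := by simp [ha]
  have hbt : b ≠ ∞ := by simp [hb]
  refine ⟨(a * δ / b) ^ (1 / r), ?_, ?_⟩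
  · intro h
    rw [ENNReal.rpow_eq_zero_iff_of_pos (by positivity)] at h
    exact (ENNReal.div_pos (mul_ne_zero ha0 hδ) hbt).ne' h
  · intro h hh
    have hfin : (a * δ / b) ^ (1 / r) ≠ ∞ :=
      ENNReal.rpow_ne_top_of_nonneg (by positivity)
        (ENNReal.div_ne_top (ENNReal.mul_ne_top hat hδt) hb0)
    have h1 := hT.maxLp hp1 hp2 (ne_top_of_le_ne_top hfin hh) (half_pos hl)
    rw [mul_div_cancel₀ l two_ne_zero] at h1
    have h2 : b * eLpNorm h p μ ^ r ≤ a * δ := by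
      calc b * eLpNorm h p μ ^ r ≤ b * ((a * δ / b) ^ (1 / r)) ^ r := by gcongr
        _ = a * δ := by
          rw [← ENNReal.rpow_mul, one_div, inv_mul_cancel₀ hr0.ne', ENNReal.rpow_one,
            ENNReal.mul_div_cancel hb0 hbt]
    exact (ENNReal.mul_le_mul_iff_right ha0 hat).1 (h1.trans h2)

/-- Weak form of almost uniform Cauchyness of the averages. -/
def DsW (μ : Measure Ω) (T : (Ω →ₘ[μ] ℝ) → (Ω →ₘ[μ] ℝ)) (f : Ω →ₘ[μ] ℝ) : Prop :=
  ∀ ε : ℝ, 0 < ε → ∀ δ : ℝ≥0∞, δ ≠ 0 → ∃ N : ℕ,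
    μ {x | ∃ m n, N ≤ m ∧ N ≤ n ∧ ε < |(cesaro μ T m f) x - (cesaro μ T n f) x|} ≤ δ

theorem DsW.exists_lim {f : Ω →ₘ[μ] ℝ} (hW : DsW μ T f) :
    ∃ fhat : Ω →ₘ[μ] ℝ, AuTendsto μ atTop (fun n => cesaro μ T n f) fhat ∧
      ∀ᵐ x ∂μ, Tendsto (fun n => (cesaro μ T n f) x) atTop (𝓝 (fhat x)) := by
  set u : ℕ → Ω → ℝ := fun n => cesaro μ T n f with hu
  have hE : ∀ δ : ℝ≥0∞, δ ≠ 0 → ∃ E : Set Ω, MeasurableSet E ∧ μ Eᶜ ≤ δ ∧ ∀ k : ℕ, ∃ N, ∀ x ∈ E,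
      ∀ m n, N ≤ m → N ≤ n → |u m x - u n x| ≤ 1 / ((k : ℝ) + 1) := by
    intro δ hδ
    obtain ⟨d, hd, hds⟩ := ENNReal.exists_pos_sum_of_countable hδ ℕ
    have h1 : ∀ k : ℕ, ∃ N : ℕ, μ {x | ∃ m n, N ≤ m ∧ N ≤ n ∧
        1 / ((k : ℝ) + 1) < |u m x - u n x|} ≤ d k := fun k =>
      hW (1 / ((k : ℝ) + 1)) (by positivity) (d k) (by simpa using (hd k).ne')
    choose N hN using h1
    set B := ⋃ k, {x | ∃ m n, N k ≤ m ∧ N k ≤ n ∧ 1 / ((k : ℝ) + 1) < |u m x - u n x|} with hB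
    refine ⟨(toMeasurable μ B)ᶜ, (measurableSet_toMeasurable μ B).compl, ?_, ?_⟩
    · rw [compl_compl, measure_toMeasurable]
      exact (measure_iUnion_le _).trans ((ENNReal.tsum_le_tsum hN).trans hds.le)
    · intro k
      refine ⟨N k, fun x hx m n hm hn => ?_⟩
      by_contra hc
      exact hx (subset_toMeasurable μ B (mem_iUnion.2 ⟨k, m, n, hm, hn, not_le.1 hc⟩))
  have hcau : ∀ E : Set Ω, (∀ k : ℕ, ∃ N, ∀ x ∈ E,
      ∀ m n, N ≤ m → N ≤ n → |u m x - u n x| ≤ 1 / ((k : ℝ) + 1)) → ∀ x ∈ E,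
      ∃ l, Tendsto (fun n => u n x) atTop (𝓝 l) := by
    intro E hE x hx
    refine cauchySeq_tendsto_of_complete (Metric.cauchySeq_iff.2 fun ε hε => ?_)
    obtain ⟨k, hk⟩ := exists_nat_one_div_lt hε
    obtain ⟨N, hN⟩ := hE k
    exact ⟨N, fun m hm n hn => (hN x hx m n hm hn).trans_lt hk⟩
  have hae : ∀ᵐ x ∂μ, ∃ l, Tendsto (fun n => u n x) atTop (𝓝 l) := by
    rw [ae_iff]
    refine le_antisymm (ENNReal.le_of_forall_pos_le_add fun δ hδ _ => ?_) (zero_le)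
    obtain ⟨E, _, h2, h3⟩ := hE δ (by simpa using hδ.ne')
    rw [zero_add]
    refine (measure_mono ?_).trans h2
    intro x hx hxE
    exact hx (hcau E h3 x hxE)
  obtain ⟨L, hL, hLt⟩ := exists_stronglyMeasurable_limit_of_tendsto_ae
    (fun n => (cesaro μ T n f).aestronglyMeasurable) hae
  have hmk := AEEqFun.coeFn_mk L hL.aestronglyMeasurable (μ := μ)
  refine ⟨AEEqFun.mk L hL.aestronglyMeasurable, ?_, ?_⟩
  · intro ε hε
    obtain ⟨E, h1, h2, h3⟩ := hE (ENNReal.ofReal ε) (by simpa using hε)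
    refine ⟨E, h1, h2, ?_⟩
    rw [ENNReal.tendsto_nhds_zero]
    intro η hη
    rcases eq_or_ne η ∞ with rfl | hηt
    · exact Eventually.of_forall fun _ => le_top
    obtain ⟨k, hk⟩ := exists_nat_one_div_lt (ENNReal.toReal_pos hη.ne' hηt)
    obtain ⟨N, hN⟩ := h3 k
    filter_upwards [eventually_ge_atTop N] with n hn
    have hb : eLpNorm (E.indicator
        (⇑(cesaro μ T n f - AEEqFun.mk L hL.aestronglyMeasurable : Ω →ₘ[μ] ℝ))) ⊤ μ ≤
        ENNReal.ofReal (1 / ((k : ℝ) + 1)) := by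
      rw [eLpNorm_exponent_top]
      refine eLpNormEssSup_le_of_ae_bound ?_
      filter_upwards [hmk, hLt, AEEqFun.coeFn_sub (cesaro μ T n f)
        (AEEqFun.mk L hL.aestronglyMeasurable)] with x a1 a2 a3
      by_cases hx : x ∈ E
      · rw [indicator_of_mem hx, a3, Pi.sub_apply, a1]
        have : Tendsto (fun m => |u n x - u m x|) atTop (𝓝 |u n x - L x|) :=
          (tendsto_const_nhds.sub a2).abs
        exact le_of_tendsto this ((eventually_ge_atTop N).mono fun m hm => hN x hx n m hn hm)
      · rw [indicator_of_notMem hx]; simp; positivity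
    refine hb.trans ((ENNReal.ofReal_le_ofReal hk.le).trans_eq (ENNReal.ofReal_toReal hηt))
  · filter_upwards [hmk, hLt] with x a1 a2
    rw [a1]; exact a2

theorem DsW.add (hT : IsPosDS μ T) {f g : Ω →ₘ[μ] ℝ} (hf : MemL1pLinf μ f) (hg : MemL1pLinf μ g)
    (h1 : DsW μ T f) (h2 : DsW μ T g) : DsW μ T (f + g) := by
  intro ε hε δ hδ
  obtain ⟨N1, hN1⟩ := h1 (ε / 2) (half_pos hε) (δ / 2) (ENNReal.half_pos hδ).ne'
  obtain ⟨N2, hN2⟩ := h2 (ε / 2) (half_pos hε) (δ / 2) (ENNReal.half_pos hδ).ne'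
  refine ⟨max N1 N2, ?_⟩
  rw [← ENNReal.add_halves δ]
  refine le_trans (le_trans (measure_mono_ae ?_) (measure_union_le _ _)) (add_le_add hN1 hN2)
  have hadd : ∀ᵐ x ∂μ, ∀ n, (cesaro μ T n (f + g)) x = (cesaro μ T n f) x + (cesaro μ T n g) x := by
    rw [ae_all_iff]; intro n
    rw [(hT.ces n).map_add f g hf hg]
    exact AEEqFun.coeFn_add _ _
  filter_upwards [hadd] with x hx hm
  obtain ⟨m, n, hm, hn, hmn⟩ := hm
  by_contra hc
  have hc1 : ¬ (ε / 2 < |(cesaro μ T m f) x - (cesaro μ T n f) x|) := fun h =>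
    hc (Or.inl ⟨m, n, (le_max_left _ _).trans hm, (le_max_left _ _).trans hn, h⟩)
  have hc2 : ¬ (ε / 2 < |(cesaro μ T m g) x - (cesaro μ T n g) x|) := fun h =>
    hc (Or.inr ⟨m, n, (le_max_right _ _).trans hm, (le_max_right _ _).trans hn, h⟩)
  rw [hx, hx, add_sub_add_comm] at hmn
  have := abs_add_le ((cesaro μ T m f) x - (cesaro μ T n f) x)
    ((cesaro μ T m g) x - (cesaro μ T n g) x)
  linarith

theorem DsW.closed (hT : IsPosDS μ T) {f : Ω →ₘ[μ] ℝ} (hf : MemL1pLinf μ f)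
    (H : ∀ ε : ℝ, 0 < ε → ∀ δ : ℝ≥0∞, δ ≠ 0 → ∃ g, MemL1pLinf μ g ∧ DsW μ T g ∧
      μ {x | ∃ n, ε < |(cesaro μ T n (f - g)) x|} ≤ δ) : DsW μ T f := by
  intro ε hε δ hδ
  obtain ⟨g, hg, hgW, hfg⟩ := H (ε / 3) (by positivity) (δ / 2) (ENNReal.half_pos hδ).ne'
  obtain ⟨N, hN⟩ := hgW (ε / 3) (by positivity) (δ / 2) (ENNReal.half_pos hδ).ne'
  refine ⟨N, ?_⟩
  rw [← ENNReal.add_halves δ]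
  refine le_trans (le_trans (measure_mono_ae ?_) (measure_union_le _ _)) (add_le_add hN hfg)
  have hadd : ∀ᵐ x ∂μ, ∀ n, (cesaro μ T n (f - g)) x = (cesaro μ T n f) x - (cesaro μ T n g) x := by
    rw [ae_all_iff]; intro n
    rw [(hT.ces n).sub hf hg]
    exact AEEqFun.coeFn_sub _ _
  filter_upwards [hadd] with x hx hm
  obtain ⟨m, n, hm, hn, hmn⟩ := hm
  by_contra hc
  have hc1 : |(cesaro μ T m g) x - (cesaro μ T n g) x| ≤ ε / 3 := not_lt.1 fun h =>
    hc (Or.inl ⟨m, n, hm, hn, h⟩)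
  have hc2 : ∀ n, |(cesaro μ T n f) x - (cesaro μ T n g) x| ≤ ε / 3 := fun n => not_lt.1 fun h =>
    hc (Or.inr ⟨n, by rw [hx]; exact h⟩)
  have b1 := abs_le.1 hc1
  have b2 := abs_le.1 (hc2 m)
  have b3 := abs_le.1 (hc2 n)
  rcases lt_abs.1 hmn with h | h <;> linarith

theorem DsW.inv {f : Ω →ₘ[μ] ℝ} (h : T f = f) : DsW μ T f := by
  intro ε hε δ hδ
  refine ⟨1, ?_⟩
  have hc : ∀ n, 1 ≤ n → cesaro μ T n f = f := by
    intro n hn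
    have h1 : ∀ k, T^[k] f = f := fun k => Function.iterate_fixed h k
    simp only [cesaro, h1, Finset.sum_const, Finset.card_range]
    rw [← Nat.cast_smul_eq_nsmul ℝ, smul_smul, inv_mul_cancel₀ (by positivity), one_smul]
  have : {x | ∃ m n, 1 ≤ m ∧ 1 ≤ n ∧ ε < |(cesaro μ T m f) x - (cesaro μ T n f) x|} = ∅ := by
    ext x
    simp only [mem_empty_iff_false, iff_false]
    rintro ⟨m, n, hm, hn, h⟩
    rw [hc m hm, hc n hn] at h
    simp at h; linarith
  rw [this]; simp

theorem DsW.cob (hT : IsPosDS μ T) {g : Ω →ₘ[μ] ℝ} (hg : eLpNorm g ⊤ μ ≠ ∞) :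
    DsW μ T (T g - g) := by
  intro ε hε δ hδ
  have hm := ds_mem_of_top hg
  set C := (eLpNorm g ⊤ μ).toReal with hC
  have hC0 : 0 ≤ C := ENNReal.toReal_nonneg
  have hb : ∀ k, ∀ᵐ x ∂μ, |(T^[k] g) x| ≤ C := by
    intro k
    have h1 := (hT.iter k).norm_top g hm
    filter_upwards [enorm_ae_le_eLpNormEssSup (T^[k] g) μ] with x hx
    rw [← eLpNorm_exponent_top] at hx
    have := ENNReal.toReal_mono hg (hx.trans h1)
    rwa [toReal_enorm, Real.norm_eq_abs, ← hC] at this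
  have hces : ∀ n, cesaro μ T n (T g - g) = (n : ℝ)⁻¹ • (T^[n] g - g) := by
    intro n
    simp only [cesaro]
    congr 1
    rw [Finset.sum_congr rfl fun k _ => (hT.iter k).sub (hT.mem hm) hm]
    simp only [← Function.iterate_succ_apply]
    rw [Finset.sum_range_sub (fun k => T^[k] g)]
    simp
  have hbd : ∀ᵐ x ∂μ, ∀ n, |(cesaro μ T n (T g - g)) x| ≤ (n : ℝ)⁻¹ * (2 * C) := by
    rw [ae_all_iff]; intro n
    rw [hces n]
    filter_upwards [hb n, hb 0, AEEqFun.coeFn_smul (n : ℝ)⁻¹ (T^[n] g - g),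
      AEEqFun.coeFn_sub (T^[n] g) g] with x a1 a2 a3 a4
    rw [a3, Pi.smul_apply, a4, Pi.sub_apply, smul_eq_mul, abs_mul,
      abs_of_nonneg (by positivity : (0 : ℝ) ≤ (n : ℝ)⁻¹)]
    have a2' : |g x| ≤ C := a2
    have := abs_sub ((T^[n] g) x) (g x)
    gcongr
    linarith
  obtain ⟨N, hN⟩ := exists_nat_gt (4 * C / ε)
  have hN0 : 0 < (N : ℝ) := lt_of_le_of_lt (by positivity) hN
  refine ⟨N, ?_⟩
  refine le_trans (le_of_eq ?_) (zero_le)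
  refine measure_mono_null (t := {x | ¬ ∀ n, |(cesaro μ T n (T g - g)) x| ≤ (n : ℝ)⁻¹ * (2 * C)})
    ?_ hbd
  rintro x ⟨m, n, h1, h2, h3⟩ hx
  have key : ∀ n : ℕ, N ≤ n → |(cesaro μ T n (T g - g)) x| ≤ ε / 2 := by
    intro n hn
    refine (hx n).trans ?_
    have hn' : (N : ℝ) ≤ n := by exact_mod_cast hn
    rw [div_lt_iff₀ hε] at hN
    rw [inv_mul_le_iff₀ (by linarith)]
    nlinarith
  have b2 := abs_le.1 (key m h1)
  have b3 := abs_le.1 (key n h2)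
  rcases lt_abs.1 h3 with h | h <;> linarith

theorem DsW.closedLp [SigmaFinite μ] (hT : IsPosDS μ T) {p : ℝ≥0∞} (hp1 : 1 ≤ p) (hp2 : p ≠ ∞)
    {f : Ω →ₘ[μ] ℝ} (hf : eLpNorm f p μ ≠ ∞)
    (H : ∀ η : ℝ≥0∞, η ≠ 0 → ∃ g, MemL1pLinf μ g ∧ DsW μ T g ∧
      eLpNorm (f - g : Ω →ₘ[μ] ℝ) p μ ≤ η) : DsW μ T f := by
  refine DsW.closed hT (ds_mem_Lp hp1 hp2 hf) fun ε hε δ hδ => ?_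
  obtain ⟨η, h1, h2⟩ := hT.max_small hp1 hp2 hε hδ
  obtain ⟨g, hg1, hg2, hg3⟩ := H η h1
  exact ⟨g, hg1, hg2, h2 _ hg3⟩

theorem DsW.L2 [SigmaFinite μ] (hT : IsPosDS μ T) {f : Ω →ₘ[μ] ℝ} (hf : eLpNorm f 2 μ ≠ ∞) :
    DsW μ T f := by
  have hmem : ∀ g : Lp ℝ 2 μ, MemL1pLinf μ (g : Ω →ₘ[μ] ℝ) := fun g =>
    ds_mem_Lp one_le_two (by simp) (Lp.eLpNorm_ne_top g)
  have hc : ∀ g : Lp ℝ 2 μ, eLpNorm (T (g : Ω →ₘ[μ] ℝ)) 2 μ ≤ eLpNorm g 2 μ := fun g =>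
    hT.contr one_le_two (by simp) (Lp.eLpNorm_ne_top g)
  let T0 : Lp ℝ 2 μ →ₗ[ℝ] Lp ℝ 2 μ :=
    { toFun := fun g => ⟨T g, (hc g).trans_lt (Lp.eLpNorm_lt_top g)⟩
      map_add' := fun a b => Subtype.ext (hT.map_add a b (hmem a) (hmem b))
      map_smul' := fun c a => Subtype.ext (hT.map_smul c a (hmem a)) }
  let T2 : Lp ℝ 2 μ →L[ℝ] Lp ℝ 2 μ := T0.mkContinuous 1 (fun g => by
    rw [one_mul, Lp.norm_def, Lp.norm_def]
    exact ENNReal.toReal_mono (Lp.eLpNorm_ne_top g) (hc g))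
  have hT2n : ‖T2‖ ≤ 1 := T0.mkContinuous_norm_le zero_le_one _
  have hT2 : ∀ g : Lp ℝ 2 μ, ((T2 g : Lp ℝ 2 μ) : Ω →ₘ[μ] ℝ) = T g := fun g => rfl
  have hcl : IsClosed {g : Lp ℝ 2 μ | DsW μ T (g : Ω →ₘ[μ] ℝ)} := by
    refine isClosed_of_closure_subset fun g hg => ?_
    refine DsW.closedLp hT one_le_two (by simp) (Lp.eLpNorm_ne_top g) fun η hη => ?_
    obtain ⟨g', hg', hd⟩ := EMetric.mem_closure_iff.1 hg η (pos_iff_ne_zero.2 hη)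
    refine ⟨g', hmem g', hg', ?_⟩
    rw [Lp.edist_def] at hd
    rw [eLpNorm_congr_ae (AEEqFun.coeFn_sub _ _)]
    exact hd.le
  have hran : ∀ g : Lp ℝ 2 μ, DsW μ T ((T2 g - g : Lp ℝ 2 μ) : Ω →ₘ[μ] ℝ) := by
    have hcl2 : IsClosed {g : Lp ℝ 2 μ | DsW μ T ((T2 g - g : Lp ℝ 2 μ) : Ω →ₘ[μ] ℝ)} :=
      hcl.preimage (T2.continuous.sub continuous_id)
    intro g
    refine (Lp.simpleFunc.denseRange (E := ℝ) (p := 2) (μ := μ) (by simp)).induction_on g hcl2 ?_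
    intro s
    have : eLpNorm ((s : Lp ℝ 2 μ) : Ω →ₘ[μ] ℝ) ⊤ μ ≠ ∞ := by
      rw [← eLpNorm_congr_ae (Lp.simpleFunc.toSimpleFunc_eq_toFun s)]
      exact (SimpleFunc.memLp_top _ μ).2.ne
    exact DsW.cob hT this
  set F := T2.eqLocus (1 : Lp ℝ 2 μ →L[ℝ] Lp ℝ 2 μ) with hF
  have hort : ∀ y ∈ Fᗮ, y ∈ closure ((T2 - 1).range : Set (Lp ℝ 2 μ)) := by
    have : Fᗮ ≤ (T2 - 1).range.topologicalClosure := by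
      rw [← Submodule.orthogonal_orthogonal_eq_closure]
      refine Submodule.orthogonal_le fun x hx ↦ eq_of_norm_le_re_inner_eq_norm_sq (𝕜 := ℝ) ?_ ?_
      · simpa using T2.le_of_opNorm_le hT2n x
      · have : ∀ y, inner ℝ (T2 y) x = inner ℝ y x := by
          intro y
          have h := (Submodule.mem_orthogonal _ _).1 hx ((T2 - 1) y) ⟨y, rfl⟩
          rw [ContinuousLinearMap.sub_apply, inner_sub_left, sub_eq_zero] at h
          exact h
        simp [this]
    intro y hy
    exact this hy
  have hall : ∀ g : Lp ℝ 2 μ, DsW μ T (g : Ω →ₘ[μ] ℝ) := by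
    intro g
    obtain ⟨y, hy, z, hz, rfl⟩ := F.exists_add_mem_mem_orthogonal g
    refine DsW.add hT (hmem y) (hmem z) (DsW.inv ?_) ?_
    · exact congrArg Subtype.val (show T2 y = y from hy)
    · refine closure_minimal ?_ hcl (hort z hz)
      rintro _ ⟨w, rfl⟩
      exact hran w
  exact hall ⟨f, hf.lt_top⟩

end DSproof

/-- **Commutative case of Theorem 4.3**: for a positive Dunford–Schwartz operator `T`
on a σ-finite measure space and `f ∈ L^p(μ)`, `1 ≤ p < ∞`, the Cesàro averages
`A_n(f) = (1/n) ∑_{k=0}^{n-1} T^k f` converge almost uniformly to some `f̂ ∈ L^p(μ)`. -/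
theorem cesaro_auTendsto_of_memLp (μ : Measure Ω) [SigmaFinite μ]
    (T : (Ω →ₘ[μ] ℝ) → (Ω →ₘ[μ] ℝ)) (hT : IsPosDS μ T)
    (p : ℝ≥0∞) (hp1 : 1 ≤ p) (hp2 : p ≠ ∞)
    (f : Ω →ₘ[μ] ℝ) (hf : eLpNorm f p μ ≠ ∞) :
    ∃ fhat : Ω →ₘ[μ] ℝ, eLpNorm fhat p μ ≠ ∞ ∧
      AuTendsto μ atTop (fun n => cesaro μ T n f) fhat := by

  have hfm : MemLp f p μ := ⟨f.aestronglyMeasurable, hf.lt_top⟩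
  have hW : DsW μ T f := by
    refine DsW.closedLp hT hp1 hp2 hf fun η hη => ?_
    obtain ⟨s, hs1, hs2⟩ := hfm.exists_simpleFunc_eLpNorm_sub_lt hp2 hη
    have hs3 : MemLp s 2 μ := (SimpleFunc.memLp_iff (by simp) (by simp)).2
      ((SimpleFunc.memLp_iff (by positivity) hp2).1 hs2)
    have hae := AEEqFun.coeFn_mk s s.aestronglyMeasurable (μ := μ)
    have hs4 : eLpNorm (AEEqFun.mk s s.aestronglyMeasurable : Ω →ₘ[μ] ℝ) 2 μ ≠ ∞ := by
      rw [eLpNorm_congr_ae hae]; exact hs3.2.ne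
    refine ⟨AEEqFun.mk s s.aestronglyMeasurable, ds_mem_Lp one_le_two (by simp) hs4,
      DsW.L2 hT hs4, ?_⟩
    rw [eLpNorm_congr_ae (AEEqFun.coeFn_sub _ _),
      eLpNorm_congr_ae ((ae_eq_refl (f : Ω → ℝ)).sub hae)]
    exact hs1.le
  obtain ⟨fhat, h1, h2⟩ := hW.exists_lim
  refine ⟨fhat, ?_, h1⟩
  have h3 := Lp.eLpNorm_lim_le_liminf_eLpNorm (p := p)
    (fun n => (cesaro μ T n f).aestronglyMeasurable) fhat h2
  refine ne_top_of_le_ne_top hf (h3.trans ?_)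
  refine liminf_le_of_le (by isBoundedDefault) fun b hb => ?_
  obtain ⟨n, hn⟩ := hb.exists
  exact hn.trans ((hT.ces n).contr hp1 hp2 hf)
end

section
/- Let (Ω, 𝒜, μ) be a σ-finite measure space and T a positive Dunford–Schwartz operator. Then for every f ∈ R_μ the Cesàro averages A_n(f) = (1/n) ∑_{k=0}^{n−1} T^k f converge almost uniformly to some function f̂ ∈ R_μ. -/
open MeasureTheory Filter Set ENNReal Topology

variable {Ω : Type*} [MeasurableSpace Ω]

theorem ae_le_of_top {μ : Measure Ω} {f : Ω →ₘ[μ] ℝ} {C : ℝ} (h : eLpNorm f ⊤ μ ≤ ENNReal.ofReal C) (hC : 0 ≤ C) :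
    ∀ᵐ ω ∂μ, |f ω| ≤ C := by
  filter_upwards [ae_le_eLpNormEssSup (f := f) (μ := μ)] with ω hω
  rw [eLpNorm_exponent_top] at h
  have := hω.trans h
  rw [← ofReal_norm] at this
  exact (ENNReal.ofReal_le_ofReal_iff hC).1 this

theorem top_le_of_ae {μ : Measure Ω} {f : Ω → ℝ} {C : ℝ} (h : ∀ᵐ ω ∂μ, |f ω| ≤ C) :
    eLpNorm f ⊤ μ ≤ ENNReal.ofReal C := by
  rw [eLpNorm_exponent_top]
  exact eLpNormEssSup_le_of_ae_bound h

theorem mem_iff_ae {μ : Measure Ω} {f : Ω →ₘ[μ] ℝ} : MemL1pLinf μ f ↔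
    ∃ g h : Ω →ₘ[μ] ℝ, Integrable g μ ∧ (∃ C : ℝ, 0 ≤ C ∧ ∀ᵐ ω ∂μ, |h ω| ≤ C) ∧ f = g + h := by
  constructor
  · rintro ⟨g, h, hg, hh, rfl⟩
    refine ⟨g, h, memLp_one_iff_integrable.1 ⟨g.aestronglyMeasurable, hg.lt_top⟩, 
      ⟨(eLpNorm h ⊤ μ).toReal, ENNReal.toReal_nonneg, ae_le_of_top ?_ ENNReal.toReal_nonneg⟩, rfl⟩
    rw [ENNReal.ofReal_toReal hh]
  · rintro ⟨g, h, hg, ⟨C, hC, hh⟩, rfl⟩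
    exact ⟨g, h, (memLp_one_iff_integrable.2 hg).2.ne, 
      ((top_le_of_ae hh).trans_lt ENNReal.ofReal_lt_top).ne, rfl⟩

theorem mem_of_int {μ : Measure Ω} {f : Ω →ₘ[μ] ℝ} (hf : Integrable f μ) : MemL1pLinf μ f := 
  mem_iff_ae.2 ⟨f, 0, hf, ⟨0, le_rfl, by
    filter_upwards [AEEqFun.coeFn_zero (μ := μ) (α := Ω) (β := ℝ)] with ω h; simp [h]⟩, by simp⟩

theorem mem_of_bdd {μ : Measure Ω} {f : Ω →ₘ[μ] ℝ} {C : ℝ} (hC : 0 ≤ C) (hf : ∀ᵐ ω ∂μ, |f ω| ≤ C) :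
    MemL1pLinf μ f := 
  mem_iff_ae.2 ⟨0, f, (integrable_zero _ _ _).congr (AEEqFun.coeFn_zero (μ := μ) (α := Ω) (β := ℝ)).symm, 
    ⟨C, hC, hf⟩, by simp⟩

def VV (μ : Measure Ω) : Submodule ℝ (Ω →ₘ[μ] ℝ) where
  carrier := {f | MemL1pLinf μ f}
  zero_mem' := mem_of_int ((integrable_zero _ _ _).congr (AEEqFun.coeFn_zero (μ := μ) (α := Ω) (β := ℝ)).symm)
  add_mem' := by
    intro a b ha hb
    obtain ⟨g, h, hg, ⟨C, hC, hh⟩, rfl⟩ := mem_iff_ae.1 ha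
    obtain ⟨g', h', hg', ⟨C', hC', hh'⟩, rfl⟩ := mem_iff_ae.1 hb
    refine mem_iff_ae.2 ⟨g + g', h + h', (hg.add hg').congr (AEEqFun.coeFn_add _ _).symm, 
      ⟨C + C', by positivity, ?_⟩, by abel⟩
    filter_upwards [hh, hh', AEEqFun.coeFn_add h h'] with ω h1 h2 h3
    rw [h3]
    exact (abs_add_le _ _).trans (add_le_add h1 h2)
  smul_mem' := by
    intro c a ha
    obtain ⟨g, h, hg, ⟨C, hC, hh⟩, rfl⟩ := mem_iff_ae.1 ha
    refine mem_iff_ae.2 ⟨c • g, c • h, (hg.smul c).congr (AEEqFun.coeFn_smul _ _).symm, 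
      ⟨|c| * C, by positivity, ?_⟩, by rw [smul_add]⟩
    filter_upwards [hh, AEEqFun.coeFn_smul c h] with ω h1 h3
    rw [h3]
    simp only [Pi.smul_apply, smul_eq_mul, abs_mul]
    gcongr

theorem DS_int {μ : Measure Ω} {T : (Ω →ₘ[μ] ℝ) → (Ω →ₘ[μ] ℝ)} (hT : IsPosDS μ T) {f : Ω →ₘ[μ] ℝ}
    (hf : Integrable f μ) : Integrable (T f) μ := by
  rw [← memLp_one_iff_integrable] at *
  exact ⟨(T f).aestronglyMeasurable, (hT.norm_one f (mem_of_int (memLp_one_iff_integrable.1 hf))).trans_lt hf.2⟩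

theorem DS_int_le {μ : Measure Ω} {T : (Ω →ₘ[μ] ℝ) → (Ω →ₘ[μ] ℝ)} (hT : IsPosDS μ T) {f : Ω →ₘ[μ] ℝ}
    (hf : Integrable f μ) : ∫ ω, |T f ω| ∂μ ≤ ∫ ω, |f ω| ∂μ := by
  have h := hT.norm_one f (mem_of_int hf)
  have h1 := DS_int hT hf
  simp only [← Real.norm_eq_abs]
  rw [integral_norm_eq_lintegral_enorm h1.1, integral_norm_eq_lintegral_enorm hf.1]
  rw [eLpNorm_one_eq_lintegral_enorm, eLpNorm_one_eq_lintegral_enorm] at h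
  exact ENNReal.toReal_mono hf.2.ne h

theorem DS_bdd {μ : Measure Ω} {T : (Ω →ₘ[μ] ℝ) → (Ω →ₘ[μ] ℝ)} (hT : IsPosDS μ T) {f : Ω →ₘ[μ] ℝ}
    {C : ℝ} (hC : 0 ≤ C) (hf : ∀ᵐ ω ∂μ, |f ω| ≤ C) : ∀ᵐ ω ∂μ, |T f ω| ≤ C := 
  ae_le_of_top ((hT.norm_top f (mem_of_bdd hC hf)).trans (top_le_of_ae hf)) hC

theorem DS_mem {μ : Measure Ω} {T : (Ω →ₘ[μ] ℝ) → (Ω →ₘ[μ] ℝ)} (hT : IsPosDS μ T) {f : Ω →ₘ[μ] ℝ}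
    (hf : MemL1pLinf μ f) : MemL1pLinf μ (T f) := by
  obtain ⟨g, h, hg, ⟨C, hC, hh⟩, rfl⟩ := mem_iff_ae.1 hf
  rw [hT.map_add _ _ (mem_of_int hg) (mem_of_bdd hC hh)]
  exact mem_iff_ae.2 ⟨T g, T h, DS_int hT hg, ⟨C, hC, DS_bdd hT hC hh⟩, rfl⟩

def TL {μ : Measure Ω} {T : (Ω →ₘ[μ] ℝ) → (Ω →ₘ[μ] ℝ)} (hT : IsPosDS μ T) : VV μ →ₗ[ℝ] VV μ where
  toFun f := ⟨T f, DS_mem hT f.2⟩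
  map_add' f g := Subtype.ext (hT.map_add _ _ f.2 g.2)
  map_smul' _ f := Subtype.ext (hT.map_smul _ _ f.2)

/-- abstract package on `VV μ`. -/
structure IsDS (μ : Measure Ω) (c : ℝ) (T : VV μ →ₗ[ℝ] VV μ) : Prop where
  pos : ∀ f : VV μ, (∀ᵐ ω ∂μ, 0 ≤ f.1 ω) → ∀ᵐ ω ∂μ, 0 ≤ (T f).1 ω
  int : ∀ f : VV μ, Integrable f.1 μ → Integrable (T f).1 μ
  int_le : ∀ f : VV μ, Integrable f.1 μ → ∫ ω, |(T f).1 ω| ∂μ ≤ c * ∫ ω, |f.1 ω| ∂μ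
  bdd : ∀ (f : VV μ) (C : ℝ), 0 ≤ C → (∀ᵐ ω ∂μ, |f.1 ω| ≤ C) → ∀ᵐ ω ∂μ, |(T f).1 ω| ≤ c * C

theorem isDS_TL {μ : Measure Ω} {T : (Ω →ₘ[μ] ℝ) → (Ω →ₘ[μ] ℝ)} (hT : IsPosDS μ T) : IsDS μ 1 (TL hT) where
  pos f hf := by
    have h0 := (AEEqFun.coeFn_zero (μ := μ) (α := Ω) (β := ℝ))
    have : (0 : Ω →ₘ[μ] ℝ) ≤ f.1 := by
      rw [← AEEqFun.coeFn_le]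
      filter_upwards [hf, h0] with ω h1 h2
      simpa [h2] using h1
    have := hT.map_pos _ f.2 this
    rw [← AEEqFun.coeFn_le] at this
    filter_upwards [this, h0] with ω h1 h2
    rw [h2] at h1
    exact h1
  int f hf := DS_int hT hf
  int_le f hf := by rw [one_mul]; exact DS_int_le hT hf
  bdd f C hC hf := by rw [one_mul]; exact DS_bdd hT hC hf

noncomputable def SS {μ : Measure Ω} (T : VV μ →ₗ[ℝ] VV μ) (n : ℕ) : VV μ →ₗ[ℝ] VV μ := 
  ∑ k ∈ Finset.range n, T ^ k

noncomputable def AA {μ : Measure Ω} (T : VV μ →ₗ[ℝ] VV μ) (n : ℕ) : VV μ →ₗ[ℝ] VV μ := 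
  (n : ℝ)⁻¹ • SS T n

theorem coe_AA {μ : Measure Ω} {T : (Ω →ₘ[μ] ℝ) → (Ω →ₘ[μ] ℝ)} (hT : IsPosDS μ T) (n : ℕ) (f : VV μ) :
    (AA (TL hT) n f).1 = cesaro μ T n f.1 := by
  have h : ∀ k : ℕ, ((TL hT ^ k) f).1 = T^[k] f.1 := by
    intro k
    induction k with
    | zero => simp
    | succ k ih =>
      rw [pow_succ', Function.iterate_succ_apply', ← ih]; rfl
  simp [AA, SS, cesaro, LinearMap.sum_apply, h]

theorem ae_add {μ : Measure Ω} (f g : VV μ) : ∀ᵐ ω ∂μ, (f + g).1 ω = f.1 ω + g.1 ω :=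
  AEEqFun.coeFn_add f.1 g.1

theorem ae_sub {μ : Measure Ω} (f g : VV μ) : ∀ᵐ ω ∂μ, (f - g).1 ω = f.1 ω - g.1 ω :=
  AEEqFun.coeFn_sub f.1 g.1

theorem ae_neg {μ : Measure Ω} (f : VV μ) : ∀ᵐ ω ∂μ, (-f).1 ω = - f.1 ω :=
  AEEqFun.coeFn_neg f.1

theorem ae_smul {μ : Measure Ω} (c : ℝ) (f : VV μ) : ∀ᵐ ω ∂μ, (c • f).1 ω = c * f.1 ω :=
  AEEqFun.coeFn_smul c f.1

theorem ae_zero {μ : Measure Ω} : ∀ᵐ ω ∂μ, (0 : VV μ).1 ω = 0 :=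
  AEEqFun.coeFn_zero (μ := μ) (α := Ω) (β := ℝ)

theorem IsDS.zero {μ : Measure Ω} : IsDS μ 0 0 where
  pos f _ := by
    filter_upwards [ae_zero (μ := μ)] with ω h
    exact h.ge
  int f _ := (integrable_zero Ω ℝ μ).congr (ae_zero (μ := μ) |>.mono fun ω h => h.symm)
  int_le f _ := by
    rw [integral_congr_ae (g := fun _ => (0:ℝ)) ((ae_zero (μ := μ)).mono fun ω h => by
      simp only [LinearMap.zero_apply, h, abs_zero])]
    simp
  bdd f C hC _ := by
    filter_upwards [ae_zero (μ := μ)] with ω h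
    simp only [LinearMap.zero_apply, h, abs_zero, zero_mul, le_refl]

theorem IsDS.one {μ : Measure Ω} : IsDS μ 1 1 where
  pos f h := h
  int f h := h
  int_le f h := by simp
  bdd f C hC h := by simpa using h

theorem IsDS.add {μ : Measure Ω} {c d : ℝ} {U W : VV μ →ₗ[ℝ] VV μ} (hU : IsDS μ c U) (hW : IsDS μ d W) :
    IsDS μ (c + d) (U + W) where
  pos f h := by
    filter_upwards [hU.pos f h, hW.pos f h, ae_add (U f) (W f)] with ω h1 h2 h3
    rw [LinearMap.add_apply, h3]; positivity
  int f h := ((hU.int f h).add (hW.int f h)).congr ((ae_add (U f) (W f)).mono fun ω h => h.symm)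
  int_le f h := by
    rw [add_mul]
    refine le_trans ?_ (add_le_add (hU.int_le f h) (hW.int_le f h))
    rw [← integral_add (hU.int f h).abs (hW.int f h).abs]
    refine integral_mono_of_nonneg (ae_of_all _ fun _ => abs_nonneg _) 
      ((hU.int f h).abs.add (hW.int f h).abs) ?_
    filter_upwards [ae_add (U f) (W f)] with ω h3
    rw [LinearMap.add_apply, h3]
    exact abs_add_le _ _
  bdd f C hC h := by
    filter_upwards [hU.bdd f C hC h, hW.bdd f C hC h, ae_add (U f) (W f)] with ω h1 h2 h3
    rw [LinearMap.add_apply, h3, add_mul]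
    exact (abs_add_le _ _).trans (add_le_add h1 h2)

theorem IsDS.smul {μ : Measure Ω} {c d : ℝ} (hd : 0 ≤ d) {U : VV μ →ₗ[ℝ] VV μ} (hU : IsDS μ c U) :
    IsDS μ (d * c) (d • U) where
  pos f h := by
    filter_upwards [hU.pos f h, ae_smul d (U f)] with ω h1 h3
    rw [LinearMap.smul_apply, h3]; positivity
  int f h := ((hU.int f h).smul d).congr ((ae_smul d (U f)).mono fun ω h => h.symm)
  int_le f h := by
    rw [integral_congr_ae (g := fun ω => d * |(U f).1 ω|) ((ae_smul d (U f)).mono fun ω h => by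
      simp only [LinearMap.smul_apply, h, abs_mul, abs_of_nonneg hd]), integral_const_mul, mul_assoc]
    exact mul_le_mul_of_nonneg_left (hU.int_le f h) hd
  bdd f C hC h := by
    filter_upwards [hU.bdd f C hC h, ae_smul d (U f)] with ω h1 h3
    rw [LinearMap.smul_apply, h3, abs_mul, abs_of_nonneg hd, mul_assoc]
    exact mul_le_mul_of_nonneg_left h1 hd

theorem IsDS.mul {μ : Measure Ω} {U W : VV μ →ₗ[ℝ] VV μ} (hU : IsDS μ 1 U) (hW : IsDS μ 1 W) :
    IsDS μ 1 (U * W) where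
  pos f h := hU.pos _ (hW.pos _ h)
  int f h := hU.int _ (hW.int _ h)
  int_le f h := by
    rw [one_mul]
    have h1 := hU.int_le _ (hW.int _ h)
    have h2 := hW.int_le _ h
    rw [one_mul] at h1 h2
    exact h1.trans h2
  bdd f C hC h := by
    have h2 := hW.bdd f C hC h
    rw [one_mul] at h2
    exact hU.bdd _ C hC h2

theorem IsDS.pow {μ : Measure Ω} {U : VV μ →ₗ[ℝ] VV μ} (hU : IsDS μ 1 U) (n : ℕ) : IsDS μ 1 (U ^ n) := by
  induction n with
  | zero => exact IsDS.one
  | succ n ih => rw [pow_succ]; exact ih.mul hU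

theorem IsDS.SS {μ : Measure Ω} {U : VV μ →ₗ[ℝ] VV μ} (hU : IsDS μ 1 U) (n : ℕ) : IsDS μ n (SS U n) := by
  induction n with
  | zero => simpa [_root_.SS] using IsDS.zero
  | succ n ih => 
    have := ih.add (hU.pow n)
    simpa [_root_.SS, Finset.sum_range_succ] using this

theorem IsDS.AA {μ : Measure Ω} {U : VV μ →ₗ[ℝ] VV μ} (hU : IsDS μ 1 U) (n : ℕ) : IsDS μ 1 (AA U n) := by
  have h := (hU.SS n).smul (d := (n:ℝ)⁻¹) (by positivity)
  rcases Nat.eq_zero_or_pos n with rfl | hn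
  · have h0 : _root_.AA U 0 = 0 := by simp [_root_.AA]
    rw [h0]
    have := IsDS.zero (μ := μ)
    exact ⟨this.pos, this.int, fun f h => (this.int_le f h).trans (by 
      rw [zero_mul, one_mul]; exact integral_nonneg fun _ => abs_nonneg _), 
      fun f C hC h => (this.bdd f C hC h).mono fun ω h => h.trans (by simpa using hC)⟩
  · rwa [inv_mul_cancel₀ (by positivity)] at h

theorem IsDS.mono {μ : Measure Ω} {c : ℝ} {U : VV μ →ₗ[ℝ] VV μ} (hU : IsDS μ c U) {f g : VV μ}
    (h : ∀ᵐ ω ∂μ, f.1 ω ≤ g.1 ω) : ∀ᵐ ω ∂μ, (U f).1 ω ≤ (U g).1 ω := by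
  have h1 : ∀ᵐ ω ∂μ, 0 ≤ (g - f).1 ω := by
    filter_upwards [h, ae_sub g f] with ω h1 h2
    rw [h2]; linarith
  filter_upwards [hU.pos _ h1, ae_sub (U g) (U f)] with ω h2 h3
  rw [map_sub, h3] at h2
  linarith

theorem SS_succ' {μ : Measure Ω} (U : VV μ →ₗ[ℝ] VV μ) (n : ℕ) (f : VV μ) :
    SS U (n + 1) f = f + U (SS U n f) := by
  simp only [SS, Finset.sum_range_succ', LinearMap.add_apply, LinearMap.sum_apply, map_sum, pow_succ', 
    pow_zero, Module.End.one_apply, Module.End.mul_apply]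
  rw [add_comm]

theorem garsia_seq {μ : Measure Ω} {T : VV μ →ₗ[ℝ] VV μ} (hT : IsDS μ 1 T) (f : VV μ)
    (hf : Integrable f.1 μ) (n : ℕ) : ∃ M : VV μ, Integrable M.1 μ ∧ (∀ᵐ ω ∂μ, 0 ≤ M.1 ω) ∧
      (∀ᵐ ω ∂μ, M.1 ω ≤ max 0 (f.1 ω + (T M).1 ω)) ∧ 
      ∀ k ≤ n, ∀ᵐ ω ∂μ, (SS T k f).1 ω ≤ M.1 ω := by
  induction n with
  | zero =>
    have h0 := ae_zero (μ := μ)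
    refine ⟨0, (integrable_zero Ω ℝ μ).congr (h0.mono fun ω h => h.symm), h0.mono fun ω h => h.ge, 
      h0.mono fun ω h => by rw [h]; exact le_max_left _ _, ?_⟩
    intro k hk
    obtain rfl : k = 0 := by omega
    simp [SS]
  | succ n ih =>
    obtain ⟨M, hi, h0, hle, hS⟩ := ih
    have hint : Integrable (fun ω => max 0 (f.1 ω + (T M).1 ω)) μ := 
      (integrable_zero Ω ℝ μ).sup (hf.add (hT.int M hi))
    have hco := AEEqFun.coeFn_mk _ hint.1
    let M' : VV μ := ⟨AEEqFun.mk _ hint.1, mem_of_int (hint.congr hco.symm)⟩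
    have hco : ∀ᵐ ω ∂μ, M'.1 ω = max 0 (f.1 ω + (T M).1 ω) := hco
    have hMM : ∀ᵐ ω ∂μ, M.1 ω ≤ M'.1 ω := by
      filter_upwards [hco, hle] with ω h1 h2
      rwa [h1]
    refine ⟨M', hint.congr (hco.mono fun ω h => h.symm), hco.mono fun ω h => h ▸ le_max_left _ _, ?_, ?_⟩
    · filter_upwards [hco, hT.mono hMM] with ω h1 h2
      rw [h1]
      exact max_le_max le_rfl (by linarith)
    · intro k hk
      rcases k with _ | k
      · filter_upwards [ae_zero (μ := μ), hco] with ω h1 h2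
        simp only [SS, Finset.range_zero, Finset.sum_empty, LinearMap.zero_apply]
        rw [h1, h2]; exact le_max_left _ _
      · rw [SS_succ']
        filter_upwards [hT.mono (hS k (by omega)), hco, ae_add f (T (SS T k f))] with ω h1 h2 h3
        rw [h2, h3]
        exact le_max_of_le_right (by linarith)

theorem garsia {μ : Measure Ω} {T : VV μ →ₗ[ℝ] VV μ} (hT : IsDS μ 1 T) (f : VV μ)
    (hf : Integrable f.1 μ) (n : ℕ) : ∃ P : Set Ω, MeasurableSet P ∧ 0 ≤ ∫ ω in P, f.1 ω ∂μ ∧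
      ∀ k ≤ n, ∀ᵐ ω ∂μ, 0 < (SS T k f).1 ω → ω ∈ P := by
  obtain ⟨M, hi, h0, hle, hS⟩ := garsia_seq hT f hf n
  have hP : MeasurableSet {ω | 0 < M.1 ω} := measurableSet_lt measurable_const M.1.measurable
  refine ⟨{ω | 0 < M.1 ω}, hP, ?_, ?_⟩
  · have hTi := hT.int M hi
    have hT0 := hT.pos M h0
    have h1 : ∫ ω, M.1 ω ∂μ = ∫ ω in {ω | 0 < M.1 ω}, M.1 ω ∂μ := by
      symm
      apply setIntegral_eq_integral_of_ae_compl_eq_zero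
      filter_upwards [h0] with ω h h'
      exact le_antisymm (not_lt.1 h') h
    have h2 : ∫ ω in {ω | 0 < M.1 ω}, (T M).1 ω ∂μ ≤ ∫ ω, (T M).1 ω ∂μ := 
      setIntegral_le_integral hTi hT0
    have h3 : ∫ ω, (T M).1 ω ∂μ ≤ ∫ ω, M.1 ω ∂μ := by
      have := hT.int_le M hi
      rw [one_mul, integral_congr_ae (hT0.mono fun ω h => abs_of_nonneg h),
        integral_congr_ae (h0.mono fun ω h => abs_of_nonneg h)] at this
      exact this
    have h4 : ∫ ω in {ω | 0 < M.1 ω}, M.1 ω ∂μ ≤ 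
        ∫ ω in {ω | 0 < M.1 ω}, (f.1 ω + (T M).1 ω) ∂μ := by
      apply setIntegral_mono_on_ae hi.integrableOn (hf.add hTi).integrableOn hP
      filter_upwards [hle] with ω h h'
      rcases le_max_iff.1 h with h | h
      · exact absurd h (not_le.2 h')
      · exact h
    rw [integral_add hf.integrableOn hTi.integrableOn] at h4
    linarith
  · intro k hk
    filter_upwards [hS k hk] with ω h h'
    exact h'.trans_le h

theorem AA_ae {μ : Measure Ω} (T : VV μ →ₗ[ℝ] VV μ) (n : ℕ) (f : VV μ) :
    ∀ᵐ ω ∂μ, (AA T n f).1 ω = (n : ℝ)⁻¹ * (SS T n f).1 ω := ae_smul _ _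

theorem weak_fin {μ : Measure Ω} {T : VV μ →ₗ[ℝ] VV μ} (hT : IsDS μ 1 T) (f : VV μ)
    (hf : Integrable f.1 μ) (n : ℕ) {lam : ℝ} (hl : 0 < lam) : 
    μ {ω | ∃ k ≤ n, lam < (AA T k f).1 ω} ≤ ENNReal.ofReal ((∫ ω, |f.1 ω| ∂μ) / lam) := by
  set B := {ω | ∃ k ≤ n, lam < (AA T k f).1 ω} with hB
  have hBe : B = ⋃ k ∈ Finset.range (n+1), {ω | lam < (AA T k f).1 ω} := by
    ext ω; simp [hB]
  have hBm : MeasurableSet B := by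
    rw [hBe]
    exact Finset.measurableSet_biUnion _ fun k _ => measurableSet_lt measurable_const (AA T k f).1.measurable
  have hBf : μ B < ∞ := by
    rw [hBe]
    apply measure_biUnion_lt_top (Finset.finite_toSet _)
    intro k _
    exact ((hT.AA k).int f hf).measure_gt_lt_top hl
  have h1i : Integrable (B.indicator (fun _ => lam)) μ := 
    (integrable_indicator_iff hBm).2 (integrableOn_const hBf.ne)
  have hco := AEEqFun.coeFn_mk _ h1i.1
  let b : VV μ := ⟨AEEqFun.mk _ h1i.1, mem_of_int (h1i.congr hco.symm)⟩
  have hco : ∀ᵐ ω ∂μ, b.1 ω = B.indicator (fun _ => lam) ω := hco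
  have hbi : Integrable b.1 μ := h1i.congr (hco.mono fun ω h => h.symm)
  have hb : ∀ᵐ ω ∂μ, |b.1 ω| ≤ lam := by
    filter_upwards [hco] with ω h
    rw [h]
    by_cases hω : ω ∈ B <;> simp [hω, abs_of_pos hl, hl.le]
  have hfbi : Integrable (f - b).1 μ := (hf.sub hbi).congr ((ae_sub f b).mono fun ω h => h.symm)
  obtain ⟨P, hPm, hP0, hP⟩ := garsia hT (f - b) hfbi n
  have hBP : ∀ᵐ ω ∂μ, ω ∈ B → ω ∈ P := by
    have h1 : ∀ᵐ ω ∂μ, ∀ k, k ≤ n → (0 < (SS T k (f-b)).1 ω → ω ∈ P) := 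
      ae_all_iff.2 fun k => by
        by_cases hk : k ≤ n
        · filter_upwards [hP k hk] with ω h _ using h
        · exact ae_of_all _ fun ω h => absurd h hk
    have h2 : ∀ᵐ ω ∂μ, ∀ k, |(AA T k b).1 ω| ≤ lam := ae_all_iff.2 fun k => by
      simpa using (hT.AA k).bdd b lam hl.le hb
    have h3 : ∀ᵐ ω ∂μ, ∀ k, (AA T k (f-b)).1 ω = (k : ℝ)⁻¹ * (SS T k (f-b)).1 ω := 
      ae_all_iff.2 fun k => AA_ae T k (f-b)
    have h4 : ∀ᵐ ω ∂μ, ∀ k, (AA T k (f-b)).1 ω = (AA T k f).1 ω - (AA T k b).1 ω := 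
      ae_all_iff.2 fun k => by
        rw [map_sub]; exact ae_sub _ _
    filter_upwards [h1, h2, h3, h4] with ω h1 h2 h3 h4 ⟨k, hk, hlt⟩
    apply h1 k hk
    have h5 : 0 < (AA T k (f-b)).1 ω := by
      rw [h4]; linarith [(abs_le.1 (h2 k)).2]
    rw [h3] at h5
    exact pos_of_mul_pos_right h5 (by positivity)
  have e1 : ∫ ω in P, (f - b).1 ω ∂μ = ∫ ω in P, f.1 ω ∂μ - ∫ ω in P, b.1 ω ∂μ := by
    rw [← integral_sub hf.integrableOn hbi.integrableOn]
    exact integral_congr_ae (ae_restrict_of_ae (ae_sub f b))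
  have e2 : ∫ ω in P, b.1 ω ∂μ = lam * μ.real B := by
    have : ∫ ω in P, b.1 ω ∂μ = ∫ ω, b.1 ω ∂μ := by
      apply setIntegral_eq_integral_of_ae_compl_eq_zero
      filter_upwards [hco, hBP] with ω h h' h''
      rw [h, indicator_of_notMem (fun hh => h'' (h' hh))]
    rw [this, integral_congr_ae hco, integral_indicator hBm, setIntegral_const, smul_eq_mul, mul_comm]
  have e3 : ∫ ω in P, f.1 ω ∂μ ≤ ∫ ω, |f.1 ω| ∂μ := by
    calc _ ≤ ∫ ω in P, |f.1 ω| ∂μ := integral_mono hf.integrableOn hf.abs.integrableOn fun ω => le_abs_self _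
      _ ≤ _ := setIntegral_le_integral hf.abs (ae_of_all _ fun _ => abs_nonneg _)
  rw [← ENNReal.ofReal_toReal hBf.ne]
  apply ENNReal.ofReal_le_ofReal
  rw [le_div_iff₀ hl, mul_comm]
  change lam * μ.real B ≤ _
  linarith

theorem weak_type1 {μ : Measure Ω} {T : VV μ →ₗ[ℝ] VV μ} (hT : IsDS μ 1 T) (f : VV μ)
    (hf : Integrable f.1 μ) {lam : ℝ} (hl : 0 < lam) : 
    μ {ω | ∃ k, lam < (AA T k f).1 ω} ≤ ENNReal.ofReal ((∫ ω, |f.1 ω| ∂μ) / lam) := by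
  have : {ω | ∃ k, lam < (AA T k f).1 ω} = ⋃ n : ℕ, {ω | ∃ k ≤ n, lam < (AA T k f).1 ω} := by
    ext ω; simp only [mem_ofPred_eq, mem_iUnion]
    exact ⟨fun ⟨k, h⟩ => ⟨k, k, le_rfl, h⟩, fun ⟨n, k, _, h⟩ => ⟨k, h⟩⟩
  rw [this, Monotone.measure_iUnion]
  · exact iSup_le fun n => weak_fin hT f hf n hl
  · intro n m hnm ω ⟨k, hk, h⟩
    exact ⟨k, hk.trans hnm, h⟩

theorem weak_type {μ : Measure Ω} {T : VV μ →ₗ[ℝ] VV μ} (hT : IsDS μ 1 T) (f : VV μ)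
    (hf : Integrable f.1 μ) {lam : ℝ} (hl : 0 < lam) : 
    μ {ω | ∃ k, lam < |(AA T k f).1 ω|} ≤ ENNReal.ofReal (2 * (∫ ω, |f.1 ω| ∂μ) / lam) := by
  have h1 := weak_type1 hT f hf hl
  have hn : Integrable (-f).1 μ := hf.neg.congr ((ae_neg f).mono fun ω h => h.symm)
  have h2 := weak_type1 hT (-f) hn hl
  rw [integral_congr_ae (g := fun ω => |f.1 ω|) ((ae_neg f).mono fun ω h => by simp only [h, abs_neg])] at h2
  have h3 : ∀ᵐ ω ∂μ, ∀ k, (AA T k (-f)).1 ω = - (AA T k f).1 ω := ae_all_iff.2 fun k => by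
    rw [map_neg]; exact ae_neg _
  calc _ ≤ μ ({ω | ∃ k, lam < (AA T k f).1 ω} ∪ {ω | ∃ k, lam < (AA T k (-f)).1 ω}) := by
        apply measure_mono_ae
        filter_upwards [h3] with ω h3 ⟨k, hk⟩
        rcases lt_abs.1 hk with hk | hk
        · exact Or.inl ⟨k, hk⟩
        · exact Or.inr ⟨k, by rw [h3]; exact hk⟩
    _ ≤ _ := measure_union_le _ _
    _ ≤ _ := add_le_add h1 h2
    _ = _ := by
      have : 0 ≤ (∫ ω, |f.1 ω| ∂μ) / lam := div_nonneg (integral_nonneg fun _ => abs_nonneg _) hl.le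
      rw [← ENNReal.ofReal_add this this]
      congr 1; ring

def DSmall {μ : Measure Ω} (δ : ℝ) (f : VV μ) : Prop :=
  ∃ a b : VV μ, f = a + b ∧ Integrable a.1 μ ∧ ∫ ω, |a.1 ω| ∂μ ≤ δ ∧ ∀ᵐ ω ∂μ, |b.1 ω| ≤ δ

theorem dsmall_max {μ : Measure Ω} {T : VV μ →ₗ[ℝ] VV μ} (hT : IsDS μ 1 T) {η : ℝ} (hη : 0 < η) {f : VV μ}
    (hf : DSmall (η ^ 2) f) : ∃ E : Set Ω, MeasurableSet E ∧ μ Eᶜ ≤ ENNReal.ofReal (2 * η) ∧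
      ∀ᵐ ω ∂μ, ω ∈ E → ∀ k, |(AA T k f).1 ω| ≤ η + η ^ 2 := by
  obtain ⟨a, b, rfl, ha, hai, hb⟩ := hf
  have hw := weak_type hT a ha hη
  have hm : MeasurableSet {ω | ∃ k, η < |(AA T k a).1 ω|} := by
    have : {ω | ∃ k, η < |(AA T k a).1 ω|} = ⋃ k, {ω | η < |(AA T k a).1 ω|} := by
      ext; simp
    rw [this]
    exact MeasurableSet.iUnion fun k => measurableSet_lt measurable_const (AA T k a).1.measurable.abs
  refine ⟨_, hm.compl, ?_, ?_⟩
  · rw [compl_compl]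
    refine hw.trans (ENNReal.ofReal_le_ofReal ?_)
    rw [div_le_iff₀ hη]; nlinarith
  · have h1 : ∀ᵐ ω ∂μ, ∀ k, |(AA T k b).1 ω| ≤ η ^ 2 := ae_all_iff.2 fun k => by
      simpa using (hT.AA k).bdd b _ (by positivity) hb
    have h2 : ∀ᵐ ω ∂μ, ∀ k, (AA T k (a + b)).1 ω = (AA T k a).1 ω + (AA T k b).1 ω := 
      ae_all_iff.2 fun k => by rw [map_add]; exact ae_add _ _
    filter_upwards [h1, h2] with ω h1 h2 h3 k
    have h4 : ¬ ∃ k, η < |(AA T k a).1 ω| := h3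
    push Not at h4
    rw [h2]
    exact (abs_add_le _ _).trans (add_le_add (h4 k) (h1 k))

noncomputable def clp (C t : ℝ) : ℝ := max (-C) (min t C)

theorem clp_cont (C : ℝ) : Continuous (clp C) := by unfold clp; fun_prop

theorem clp_abs {C : ℝ} (hC : 0 ≤ C) (t : ℝ) : |clp C t| ≤ C := by
  unfold clp; rw [abs_le]; grind

theorem clp_abs' {C : ℝ} (hC : 0 ≤ C) (t : ℝ) : |clp C t| ≤ |t| := by
  unfold clp; grind

theorem sub_clp {C : ℝ} (hC : 0 ≤ C) (t : ℝ) : |t - clp C t| = max (|t| - C) 0 := by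
  unfold clp; grind

theorem exists_clp {μ : Measure Ω} (f : Ω →ₘ[μ] ℝ) {C : ℝ} (hC : 0 ≤ C) :
    ∃ b : VV μ, ∀ᵐ ω ∂μ, b.1 ω = clp C (f ω) := by
  have h := AEEqFun.coeFn_comp (clp C) (clp_cont C) f
  refine ⟨⟨AEEqFun.comp (clp C) (clp_cont C) f, mem_of_bdd hC ?_⟩, h⟩
  filter_upwards [h] with ω h
  rw [h]; exact clp_abs hC _

theorem sub_clp_le_sq {C : ℝ} (hC : 0 < C) (t : ℝ) : |t - clp C t| ≤ t ^ 2 / C := by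
  rw [sub_clp hC.le, le_div_iff₀ hC]
  rcases le_total (|t| - C) 0 with h | h
  · rw [max_eq_right h]; nlinarith
  · rw [max_eq_left h, ← sq_abs t]; nlinarith

theorem decomp_L2 {μ : Measure Ω} (f : Ω →ₘ[μ] ℝ) (hf : Integrable (fun ω => (f ω)^2) μ) {δ : ℝ} (hδ : 0 < δ) :
    ∃ a b : VV μ, f = a.1 + b.1 ∧ Integrable a.1 μ ∧ ∫ ω, |a.1 ω| ∂μ ≤ (∫ ω, (f ω)^2 ∂μ) / δ ∧
     ∀ᵐ ω ∂μ, |b.1 ω| ≤ δ := by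
  obtain ⟨b, hb⟩ := exists_clp f hδ.le
  have h1 : ∀ᵐ ω ∂μ, |(f - b.1) ω| ≤ (f ω)^2 / δ := by
    filter_upwards [hb, AEEqFun.coeFn_sub f b.1] with ω h1 h2
    rw [h2, Pi.sub_apply, h1]
    exact sub_clp_le_sq hδ _
  have hi : Integrable (f - b.1) μ := (hf.div_const δ).mono' (f - b.1).aestronglyMeasurable h1
  refine ⟨⟨f - b.1, mem_of_int hi⟩, b, by simp, hi, ?_, ?_⟩
  · rw [← integral_div]
    exact integral_mono_ae hi.abs (hf.div_const δ) h1
  · filter_upwards [hb] with ω h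
    rw [h]; exact clp_abs hδ.le _

theorem mem_of_L2 {μ : Measure Ω} (f : Ω →ₘ[μ] ℝ) (hf : Integrable (fun ω => (f ω)^2) μ) : f ∈ VV μ := by
  obtain ⟨a, b, h, _⟩ := decomp_L2 f hf one_pos
  rw [h]; exact (VV μ).add_mem a.2 b.2

theorem small_of_L2 {μ : Measure Ω} (f : VV μ) (hf : Integrable (fun ω => (f.1 ω)^2) μ) {δ : ℝ} (hδ : 0 < δ) 
    (h : ∫ ω, (f.1 ω)^2 ∂μ ≤ δ ^ 2) : DSmall δ f := by
  obtain ⟨a, b, e, h1, h2, h3⟩ := decomp_L2 f.1 hf hδ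
  refine ⟨a, b, Subtype.ext e, h1, h2.trans ?_, h3⟩
  rw [div_le_iff₀ hδ]; nlinarith

theorem sq_le_of_rat {q t : ℝ} (h : ∀ a : ℚ, 0 ≤ q - 2 * a * t + (a : ℝ) ^ 2) : t ^ 2 ≤ q := by
  have h1 : ∀ a : ℝ, 0 ≤ q - 2 * a * t + a ^ 2 := fun a => 
    isClosed_property (p := fun a : ℝ => 0 ≤ q - 2 * a * t + a ^ 2) Rat.denseRange_cast
      (isClosed_le continuous_const (by fun_prop)) h a
  have := h1 t
  nlinarith

theorem T_sq {μ : Measure Ω} {T : VV μ →ₗ[ℝ] VV μ} (hT : IsDS μ 1 T) (f : VV μ)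
    (hf : Integrable (fun ω => (f.1 ω)^2) μ) : Integrable (fun ω => ((T f).1 ω)^2) μ ∧ 
      ∫ ω, ((T f).1 ω)^2 ∂μ ≤ ∫ ω, (f.1 ω)^2 ∂μ := by
  have hqc := AEEqFun.coeFn_mk _ hf.1
  let q : VV μ := ⟨AEEqFun.mk _ hf.1, mem_of_int (hf.congr hqc.symm)⟩
  have hqc : ∀ᵐ ω ∂μ, q.1 ω = (f.1 ω)^2 := hqc
  have hqi : Integrable q.1 μ := hf.congr (hqc.mono fun ω h => h.symm)
  have h1c := AEEqFun.coeFn_const Ω (μ := μ) (1:ℝ)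
  have h1b : ∀ᵐ ω ∂μ, |(AEEqFun.const Ω (1:ℝ) : Ω →ₘ[μ] ℝ) ω| ≤ 1 := by
    filter_upwards [h1c] with ω h
    rw [h]; simp
  let e : VV μ := ⟨AEEqFun.const Ω (1:ℝ), mem_of_bdd zero_le_one h1b⟩
  have h1c : ∀ᵐ ω ∂μ, e.1 ω = 1 := h1c
  have hTe : ∀ᵐ ω ∂μ, |(T e).1 ω| ≤ 1 * 1 := hT.bdd e 1 zero_le_one h1b
  have key : ∀ᵐ ω ∂μ, ∀ a : ℚ, 0 ≤ (T q).1 ω - 2 * a * (T f).1 ω + (a : ℝ) ^ 2 := by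
    rw [ae_all_iff]; intro a
    have h0 : ∀ᵐ ω ∂μ, 0 ≤ (q - (2 * a : ℝ) • f + ((a : ℝ)^2) • e).1 ω := by
      filter_upwards [hqc, h1c, ae_add (q - (2 * a : ℝ) • f) (((a : ℝ)^2) • e), ae_sub q ((2 * a : ℝ) • f),
        ae_smul (2 * a : ℝ) f, ae_smul ((a:ℝ)^2) e] with ω h1 h2 h3 h4 h5 h6
      rw [h3, h4, h5, h6, h1, h2]
      nlinarith [sq_nonneg (f.1 ω - a)]
    have h7 := hT.pos _ h0
    rw [map_add, map_sub, map_smul, map_smul] at h7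
    filter_upwards [h7, hTe, ae_add (T q - (2 * a : ℝ) • T f) (((a : ℝ)^2) • T e), 
        ae_sub (T q) ((2 * a : ℝ) • T f),
        ae_smul (2 * a : ℝ) (T f), ae_smul ((a:ℝ)^2) (T e)] with ω h1 h2 h3 h4 h5 h6
    rw [h3, h4, h5, h6] at h1
    have := (abs_le.1 h2).2
    nlinarith [mul_nonneg (sq_nonneg (a:ℝ)) (sub_nonneg.2 this)]
  have hle : ∀ᵐ ω ∂μ, ((T f).1 ω)^2 ≤ (T q).1 ω := key.mono fun ω h => sq_le_of_rat h
  have hTq := hT.int q hqi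
  have hi : Integrable (fun ω => ((T f).1 ω)^2) μ := by
    refine hTq.mono' ((T f).1.aestronglyMeasurable.pow 2) ?_
    filter_upwards [hle] with ω h
    rwa [Real.norm_eq_abs, abs_of_nonneg (sq_nonneg _)]
  refine ⟨hi, ?_⟩
  calc _ ≤ ∫ ω, |(T q).1 ω| ∂μ := integral_mono_ae hi hTq.abs (hle.mono fun ω h => h.trans (le_abs_self _))
    _ ≤ _ := (hT.int_le q hqi).trans_eq (one_mul _)
    _ = _ := integral_congr_ae (hqc.mono fun ω h => by simp only [h, abs_of_nonneg (sq_nonneg (f.1 ω))])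

theorem L2_int {μ : Measure Ω} (x : Lp ℝ 2 μ) : Integrable (fun ω => (x.1 ω)^2) μ := 
  (Lp.memLp x).integrable_sq

theorem L2_norm {μ : Measure Ω} (x : Lp ℝ 2 μ) : ‖x‖ ^ 2 = ∫ ω, (x.1 ω)^2 ∂μ := by
  rw [← real_inner_self_eq_norm_sq, L2.inner_def]
  apply integral_congr_ae
  exact ae_of_all _ fun ω => by simp [sq]

def iot {μ : Measure Ω} : Lp ℝ 2 μ →ₗ[ℝ] VV μ where
  toFun x := ⟨x.1, mem_of_L2 x.1 (L2_int x)⟩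
  map_add' _ _ := rfl
  map_smul' _ _ := rfl

noncomputable def T2 {μ : Measure Ω} {T : VV μ →ₗ[ℝ] VV μ} (hT : IsDS μ 1 T) : Lp ℝ 2 μ →L[ℝ] Lp ℝ 2 μ :=
  LinearMap.mkContinuous { 
    toFun := fun x => ⟨(T (iot x)).1, Lp.mem_Lp_iff_memLp.2 
      ((memLp_two_iff_integrable_sq (T (iot x)).1.aestronglyMeasurable).2 (T_sq hT (iot x) (L2_int x)).1)⟩
    map_add' := fun x y => by
      apply Subtype.ext
      simp only [map_add]; rfl
    map_smul' := fun c x => by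
      apply Subtype.ext
      simp only [map_smul]; rfl } 1 (fun x => by
    rw [one_mul]
    refine le_of_sq_le_sq ?_ (norm_nonneg _)
    rw [L2_norm, L2_norm]
    exact (T_sq hT (iot x) (L2_int x)).2)

theorem iot_T2 {μ : Measure Ω} {T : VV μ →ₗ[ℝ] VV μ} (hT : IsDS μ 1 T) (x : Lp ℝ 2 μ) :
    iot (T2 hT x) = T (iot x) := rfl

theorem T2_norm {μ : Measure Ω} {T : VV μ →ₗ[ℝ] VV μ} (hT : IsDS μ 1 T) : ‖T2 hT‖ ≤ 1 := 
  LinearMap.mkContinuous_norm_le _ zero_le_one _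

theorem hilb_erg {E : Type*} [NormedAddCommGroup E] [InnerProductSpace ℝ E] [CompleteSpace E] (U : E →L[ℝ] E) 
    (hU : ‖U‖ ≤ 1) (x : E) : ∃ p : E, U p = p ∧ ∀ δ : ℝ, 0 < δ → ∃ n : ℕ, 0 < n ∧ 
      ‖birkhoffAverage ℝ U _root_.id n x - p‖ < δ := by
  have ht := U.tendsto_birkhoffAverage_orthogonalProjection hU x
  generalize (U.eqLocus (1 : E →L[ℝ] E)).orthogonalProjectionOnto x = P at ht
  refine ⟨P.1, P.2, ?_⟩
  intro δ hδ
  obtain ⟨n, hn, hn0⟩ := (((Metric.tendsto_nhds.1 ht) δ hδ).and (eventually_gt_atTop 0)).exists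
  rw [dist_eq_norm] at hn
  exact ⟨n, hn0, hn⟩

theorem iot_birk {μ : Measure Ω} {T : VV μ →ₗ[ℝ] VV μ} (U : Lp ℝ 2 μ →L[ℝ] Lp ℝ 2 μ) 
    (hU : ∀ x, iot (U x) = T (iot x)) (X : Lp ℝ 2 μ) (n : ℕ) : 
    AA T n (iot X) = iot (birkhoffAverage ℝ U _root_.id n X) := by
  have hk : ∀ k : ℕ, iot (U^[k] X) = (T ^ k) (iot X) := by
    intro k
    induction k with
    | zero => rfl
    | succ k ih => rw [Function.iterate_succ_apply', hU, ih, pow_succ', Module.End.mul_apply]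
  simp only [birkhoffAverage, birkhoffSum, AA, SS, map_smul, map_sum, LinearMap.smul_apply, 
    LinearMap.sum_apply, _root_.id, hk]

theorem small_iot {μ : Measure Ω} (X : Lp ℝ 2 μ) {δ : ℝ} (hδ : 0 < δ) (h : ‖X‖ < δ) : DSmall δ (iot X) := by
  apply small_of_L2 _ (L2_int X) hδ
  refine (L2_norm X).symm.trans_le ?_
  gcongr

theorem mean_erg {μ : Measure Ω} {T : VV μ →ₗ[ℝ] VV μ} (hT : IsDS μ 1 T) (x : VV μ)
    (hx : Integrable (fun ω => (x.1 ω)^2) μ) : ∃ p : VV μ, T p = p ∧ ∀ δ : ℝ, 0 < δ → ∃ n : ℕ, 0 < n ∧ 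
      DSmall δ (AA T n x - p) := by
  obtain ⟨X, hX⟩ : ∃ X : Lp ℝ 2 μ, iot X = x := ⟨⟨x.1, Lp.mem_Lp_iff_memLp.2 
      ((memLp_two_iff_integrable_sq x.1.aestronglyMeasurable).2 hx)⟩, rfl⟩
  obtain ⟨U, hU, hU1⟩ : ∃ U : Lp ℝ 2 μ →L[ℝ] Lp ℝ 2 μ, (∀ x, iot (U x) = T (iot x)) ∧ ‖U‖ ≤ 1 :=
    ⟨T2 hT, iot_T2 hT, T2_norm hT⟩
  obtain ⟨P, hP, h⟩ := hilb_erg U hU1 X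
  refine ⟨iot P, by rw [← hU, hP], ?_⟩
  intro δ hδ
  obtain ⟨n, hn, hn'⟩ := h δ hδ
  refine ⟨n, hn, ?_⟩
  rw [← hX, iot_birk U hU, ← map_sub]
  exact small_iot _ hδ hn'
def SB {μ : Measure Ω} (T : VV μ →ₗ[ℝ] VV μ) (y : VV μ) : Prop :=
  ∃ C : ℝ, 0 ≤ C ∧ ∀ m, ∀ᵐ ω ∂μ, |(SS T m y).1 ω| ≤ C

theorem SB.add {μ : Measure Ω} {T : VV μ →ₗ[ℝ] VV μ} {y z : VV μ} (hy : SB T y) (hz : SB T z) : SB T (y + z) := by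
  obtain ⟨C, hC, h⟩ := hy
  obtain ⟨D, hD, h'⟩ := hz
  refine ⟨C + D, by positivity, fun m => ?_⟩
  rw [map_add]
  filter_upwards [h m, h' m, ae_add (SS T m y) (SS T m z)] with ω h1 h2 h3
  rw [h3]
  exact (abs_add_le _ _).trans (add_le_add h1 h2)

theorem SB.smul {μ : Measure Ω} {T : VV μ →ₗ[ℝ] VV μ} {y : VV μ} (c : ℝ) (hy : SB T y) : SB T (c • y) := by
  obtain ⟨C, hC, h⟩ := hy
  refine ⟨|c| * C, by positivity, fun m => ?_⟩
  rw [map_smul]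
  filter_upwards [h m, ae_smul c (SS T m y)] with ω h1 h3
  rw [h3, abs_mul]
  gcongr

theorem SB.zero {μ : Measure Ω} {T : VV μ →ₗ[ℝ] VV μ} : SB T (0 : VV μ) := by
  refine ⟨0, le_rfl, fun m => ?_⟩
  rw [map_zero]
  filter_upwards [ae_zero (μ := μ)] with ω h
  rw [h, abs_zero]

theorem SS_cob {μ : Measure Ω} (T : VV μ →ₗ[ℝ] VV μ) (x : VV μ) (m : ℕ) :
    SS T m (x - T x) = x - (T ^ m) x := by
  induction m with
  | zero => simp [SS]
  | succ m ih =>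
    have : SS T (m+1) (x - T x) = SS T m (x - T x) + (T ^ m) (x - T x) := by
      simp [SS, Finset.sum_range_succ]
    rw [this, ih, map_sub, pow_succ, Module.End.mul_apply]
    abel

theorem SB.cob {μ : Measure Ω} {T : VV μ →ₗ[ℝ] VV μ} (hT : IsDS μ 1 T) {x : VV μ} {K : ℝ} (hK : 0 ≤ K)
    (hx : ∀ᵐ ω ∂μ, |x.1 ω| ≤ K) : SB T (x - T x) := by
  refine ⟨K + K, by positivity, fun m => ?_⟩
  rw [SS_cob]
  filter_upwards [hx, (hT.pow m).bdd x K hK hx, ae_sub x ((T ^ m) x)] with ω h1 h2 h3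
  rw [one_mul] at h2
  rw [h3]
  exact (abs_sub _ _).trans (add_le_add h1 h2)

theorem SB.cob_pow {μ : Measure Ω} {T : VV μ →ₗ[ℝ] VV μ} (hT : IsDS μ 1 T) {x : VV μ} {K : ℝ} (hK : 0 ≤ K)
    (hx : ∀ᵐ ω ∂μ, |x.1 ω| ≤ K) (j : ℕ) : SB T (x - (T ^ j) x) := by
  induction j with
  | zero => simpa using SB.zero
  | succ j ih =>
    have h1 : ∀ᵐ ω ∂μ, |((T ^ j) x).1 ω| ≤ K := by simpa using (hT.pow j).bdd x K hK hx
    have : x - (T ^ (j+1)) x = (x - (T ^ j) x) + ((T ^ j) x - T ((T ^ j) x)) := by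
      rw [pow_succ', Module.End.mul_apply]; abel
    rw [this]
    exact ih.add (SB.cob hT hK h1)

theorem SB.cob_AA {μ : Measure Ω} {T : VV μ →ₗ[ℝ] VV μ} (hT : IsDS μ 1 T) {x : VV μ} {K : ℝ} (hK : 0 ≤ K)
    (hx : ∀ᵐ ω ∂μ, |x.1 ω| ≤ K) {n : ℕ} (hn : 0 < n) : SB T (x - AA T n x) := by
  have h1 : ∀ m : ℕ, SB T ((m : ℝ) • x - SS T m x) := by
    intro m
    induction m with
    | zero => simpa [SS] using SB.zero
    | succ m ih =>
      have : ((m + 1 : ℕ) : ℝ) • x - SS T (m+1) x = ((m : ℝ) • x - SS T m x) + (x - (T ^ m) x) := by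
        simp only [SS, Finset.sum_range_succ, LinearMap.add_apply]
        push_cast
        rw [add_smul, one_smul]; abel
      rw [this]
      exact ih.add (SB.cob_pow hT hK hx m)
  have h2 := (h1 n).smul (n : ℝ)⁻¹
  rwa [smul_sub, smul_smul, inv_mul_cancel₀ (by positivity), one_smul] at h2

theorem rmu_decomp {μ : Measure Ω} (f : VV μ) (hf : ∀ lam : ℝ, 0 < lam → μ {ω | lam < |f.1 ω|} < ∞)
    {δ : ℝ} (hδ : 0 < δ) : ∃ u b : VV μ, f = u + b ∧ Integrable u.1 μ ∧ ∀ᵐ ω ∂μ, |b.1 ω| ≤ δ := by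
  obtain ⟨b, hb⟩ := exists_clp f.1 hδ.le
  obtain ⟨g, h, hg, ⟨C, hC, hh⟩, e⟩ := mem_iff_ae.1 f.2
  refine ⟨f - b, b, by abel, ?_, hb.mono fun ω h => h ▸ clp_abs hδ.le _⟩
  have hm : MeasurableSet {ω | δ < |f.1 ω|} := measurableSet_lt measurable_const f.1.measurable.abs
  have hi : Integrable (fun ω => |g ω| + ({ω | δ < |f.1 ω|}).indicator (fun _ => C) ω) μ := 
    hg.abs.add ((integrable_indicator_iff hm).2 (integrableOn_const (hf δ hδ).ne))
  refine hi.mono' (f - b).1.aestronglyMeasurable ?_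
  have e' : ∀ᵐ ω ∂μ, f.1 ω = g ω + h ω := by rw [e]; exact AEEqFun.coeFn_add g h
  filter_upwards [hb, ae_sub f b, hh, e'] with ω h1 h2 h3 h4
  rw [h2, h1, Real.norm_eq_abs, sub_clp hδ.le]
  by_cases hω : δ < |f.1 ω|
  · rw [indicator_of_mem (by exact hω)]
    have := abs_add_le (g ω) (h ω)
    rw [← h4] at this
    exact max_le (by linarith) (by positivity)
  · rw [indicator_of_notMem (by exact hω), add_zero]
    exact max_le (by linarith [abs_nonneg (g ω)]) (abs_nonneg _)

theorem int_trunc {μ : Measure Ω} (u : VV μ) (hu : Integrable u.1 μ) {δ : ℝ} (hδ : 0 < δ) : 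
    ∃ (K : ℝ) (x s : VV μ), 0 ≤ K ∧ u = x + s ∧ Integrable x.1 μ ∧ (∀ᵐ ω ∂μ, |x.1 ω| ≤ K) ∧ Integrable s.1 μ ∧
      ∫ ω, |s.1 ω| ∂μ ≤ δ := by
  have ht : Tendsto (fun n : ℕ => ∫ ω, |u.1 ω - clp n (u.1 ω)| ∂μ) atTop (𝓝 (∫ ω, (0:ℝ) ∂μ)) := by
    refine tendsto_integral_of_dominated_convergence (fun ω => |u.1 ω|) ?_ hu.abs ?_ ?_
    · intro n
      exact (hu.1.sub ((clp_cont n).comp_aestronglyMeasurable hu.1)).norm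
    · intro n
      refine ae_of_all _ fun ω => ?_
      rw [Real.norm_eq_abs, abs_abs, sub_clp n.cast_nonneg]
      exact max_le (by linarith [(n.cast_nonneg : (0:ℝ) ≤ n)]) (abs_nonneg _)
    · refine ae_of_all _ fun ω => ?_
      apply tendsto_const_nhds.congr'
      obtain ⟨N, hN⟩ := exists_nat_ge |u.1 ω|
      filter_upwards [eventually_ge_atTop N] with n hn
      rw [sub_clp n.cast_nonneg, max_eq_right]
      have : (N : ℝ) ≤ n := by exact_mod_cast hn
      linarith
  rw [integral_zero] at ht
  obtain ⟨n, hn⟩ := (ht.eventually (gt_mem_nhds hδ)).exists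
  obtain ⟨b, hb⟩ := exists_clp u.1 (n.cast_nonneg (α := ℝ))
  have hbi : Integrable b.1 μ := by
    refine hu.abs.mono' b.1.aestronglyMeasurable (hb.mono fun ω h => ?_)
    rw [h, Real.norm_eq_abs]; exact clp_abs' n.cast_nonneg _
  refine ⟨n, b, u - b, n.cast_nonneg, by abel, hbi, hb.mono fun ω h => h ▸ clp_abs n.cast_nonneg _, 
    (hu.sub hbi).congr ((ae_sub u b).mono fun ω h => h.symm), ?_⟩
  refine le_of_eq_of_le (integral_congr_ae ?_) hn.le
  filter_upwards [hb, ae_sub u b] with ω h1 h2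
  simp only [h2, h1]

theorem full_decomp {μ : Measure Ω} {T : VV μ →ₗ[ℝ] VV μ} (hT : IsDS μ 1 T) (f : VV μ) 
    (hf : ∀ lam : ℝ, 0 < lam → μ {ω | lam < |f.1 ω|} < ∞)
    {δ : ℝ} (hδ : 0 < δ) : ∃ p y s t : VV μ, f = p + y + s + t ∧ T p = p ∧ SB T y ∧ DSmall δ s ∧ DSmall δ t := by
  obtain ⟨u, b, rfl, hu, hb⟩ := rmu_decomp f hf hδ
  obtain ⟨K, x, a, hK, rfl, hx, hxK, ha, haδ⟩ := int_trunc u hu hδ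
  have hx2 : Integrable (fun ω => (x.1 ω)^2) μ := by
    refine (hx.abs.const_mul K).mono' (x.1.aestronglyMeasurable.pow 2) (hxK.mono fun ω h => ?_)
    rw [Real.norm_eq_abs, abs_of_nonneg (sq_nonneg _), ← sq_abs, sq]
    gcongr
  obtain ⟨p, hp, hP⟩ := mean_erg hT x hx2
  obtain ⟨n, hn, hs⟩ := hP δ hδ
  exact ⟨p, x - AA T n x, AA T n x - p, a + b, by abel, hp, SB.cob_AA hT hK hxK hn, hs, 
    a, b, rfl, ha, haδ, hb⟩

theorem AA_fix {μ : Measure Ω} {T : VV μ →ₗ[ℝ] VV μ} {p : VV μ} (hp : T p = p) {n : ℕ} (hn : 0 < n) :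
    AA T n p = p := by
  have h : ∀ k : ℕ, (T ^ k) p = p := by
    intro k
    induction k with
    | zero => simp
    | succ k ih => rw [pow_succ', Module.End.mul_apply, ih, hp]
  simp only [AA, SS, LinearMap.smul_apply, LinearMap.sum_apply, h, Finset.sum_const, Finset.card_range]
  rw [← Nat.cast_smul_eq_nsmul ℝ, smul_smul, inv_mul_cancel₀ (by positivity), one_smul]

theorem au_cauchy {μ : Measure Ω} {T : VV μ →ₗ[ℝ] VV μ} (hT : IsDS μ 1 T) (f : VV μ) 
    (hf : ∀ lam : ℝ, 0 < lam → μ {ω | lam < |f.1 ω|} < ∞) {ε δ : ℝ} (hε : 0 < ε) (hδ : 0 < δ) :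
    ∃ E : Set Ω, MeasurableSet E ∧ μ Eᶜ ≤ ENNReal.ofReal ε ∧ ∃ N : ℕ, ∀ᵐ ω ∂μ, ω ∈ E → 
      ∀ m ≥ N, ∀ n ≥ N, |(AA T m f).1 ω - (AA T n f).1 ω| ≤ δ := by
  obtain ⟨η, hη, h1, h2, h3⟩ : ∃ η : ℝ, 0 < η ∧ η ≤ ε / 4 ∧ η ≤ δ / 16 ∧ η ≤ 1 := 
    ⟨min (ε/4) (min (δ/16) 1), by positivity, min_le_left _ _, 
      (min_le_right _ _).trans (min_le_left _ _), (min_le_right _ _).trans (min_le_right _ _)⟩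
  obtain ⟨p, y, s, t, rfl, hp, ⟨C, hC, hy⟩, hs, ht⟩ := full_decomp hT f hf (δ := η^2) (by positivity)
  obtain ⟨E, hE, hEμ, hEs⟩ := dsmall_max hT hη hs
  obtain ⟨F, hF, hFμ, hFt⟩ := dsmall_max hT hη ht
  obtain ⟨N, hN⟩ := exists_nat_gt (4 * C / δ)
  have hN0 : (0:ℝ) < N := lt_of_le_of_lt (by positivity) hN
  refine ⟨E ∩ F, hE.inter hF, ?_, N, ?_⟩
  · rw [compl_inter]
    refine (measure_union_le _ _).trans ((add_le_add hEμ hFμ).trans ?_)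
    rw [← ENNReal.ofReal_add (by positivity) (by positivity)]
    exact ENNReal.ofReal_le_ofReal (by linarith)
  have hy' : ∀ᵐ ω ∂μ, ∀ m, |(SS T m y).1 ω| ≤ C := ae_all_iff.2 hy
  have hA : ∀ᵐ ω ∂μ, ∀ m, (AA T m y).1 ω = (m : ℝ)⁻¹ * (SS T m y).1 ω := 
    ae_all_iff.2 fun m => AA_ae T m y
  have hd : ∀ᵐ ω ∂μ, ∀ m, (AA T m (p + y + s + t)).1 ω = 
      (AA T m p).1 ω + (AA T m y).1 ω + (AA T m s).1 ω + (AA T m t).1 ω := ae_all_iff.2 fun m => by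
    rw [map_add, map_add, map_add]
    filter_upwards [ae_add (AA T m p + AA T m y + AA T m s) (AA T m t), 
      ae_add (AA T m p + AA T m y) (AA T m s), ae_add (AA T m p) (AA T m y)] with ω h1 h2 h3
    rw [h1, h2, h3]
  filter_upwards [hEs, hFt, hy', hA, hd] with ω h4 h5 h6 h7 h8 ⟨hωE, hωF⟩
  have key : ∀ m ≥ N, |(AA T m (p + y + s + t)).1 ω - p.1 ω| ≤ δ / 2 := by
    intro m hm
    have hm' : (N : ℝ) ≤ m := by exact_mod_cast hm
    have hm0 : 0 < m := by exact_mod_cast hN0.trans_le hm'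
    rw [h8, AA_fix hp hm0]
    have e1 : |(AA T m y).1 ω| ≤ δ / 4 := by
      rw [h7, abs_mul, abs_of_nonneg (by positivity), inv_mul_le_iff₀ (by positivity)]
      refine (h6 m).trans ?_
      rw [div_lt_iff₀ hδ] at hN
      nlinarith
    have e2 := abs_le.1 (h4 hωE m)
    have e3 := abs_le.1 (h5 hωF m)
    have e1 := abs_le.1 e1
    rw [abs_le]
    constructor <;> nlinarith
  intro m hm n hn
  have a1 := abs_le.1 (key m hm)
  have a2 := abs_le.1 (key n hn)
  rw [abs_le]
  constructor <;> linarith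

theorem au_set {μ : Measure Ω} {T : VV μ →ₗ[ℝ] VV μ} (hT : IsDS μ 1 T) (f : VV μ) 
    (hf : ∀ lam : ℝ, 0 < lam → μ {ω | lam < |f.1 ω|} < ∞) {ε : ℝ} (hε : 0 < ε) :
    ∃ E : Set Ω, MeasurableSet E ∧ μ Eᶜ ≤ ENNReal.ofReal ε ∧ ∃ N : ℕ → ℕ, ∀ᵐ ω ∂μ, ω ∈ E → 
      ∀ j : ℕ, ∀ m ≥ N j, ∀ n ≥ N j, |(AA T m f).1 ω - (AA T n f).1 ω| ≤ 1 / ((j : ℝ) + 1) := by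
  choose E hE hEμ N hN using fun j : ℕ => au_cauchy hT f hf (ε := ε / 2 / 2 ^ j) (δ := 1 / ((j : ℝ) + 1)) 
    (by positivity) (by positivity)
  refine ⟨⋂ j, E j, MeasurableSet.iInter hE, ?_, N, ?_⟩
  · rw [compl_iInter]
    calc _ ≤ ∑' j, μ (E j)ᶜ := measure_iUnion_le _
      _ ≤ ∑' j : ℕ, ENNReal.ofReal (ε / 2 / 2 ^ j) := ENNReal.tsum_le_tsum hEμ
      _ = ENNReal.ofReal (∑' j : ℕ, ε / 2 / 2 ^ j) := 
        (ENNReal.ofReal_tsum_of_nonneg (fun j => by positivity) (summable_geometric_two' ε)).symm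
      _ = _ := by rw [tsum_geometric_two']
  · filter_upwards [ae_all_iff.2 hN] with ω h hω j
    exact h j (mem_iInter.1 hω j)

theorem ae_conv {μ : Measure Ω} {T : VV μ →ₗ[ℝ] VV μ} (hT : IsDS μ 1 T) (f : VV μ) 
    (hf : ∀ lam : ℝ, 0 < lam → μ {ω | lam < |f.1 ω|} < ∞) : 
    ∃ g : Ω →ₘ[μ] ℝ, ∀ᵐ ω ∂μ, Tendsto (fun n => (AA T n f).1 ω) atTop (𝓝 (g ω)) := by
  choose E hE hEμ N hN using fun j : ℕ => au_set hT f hf (ε := 1 / ((j : ℝ) + 1)) (by positivity)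
  have h0 : ∀ᵐ ω ∂μ, ∃ j, ω ∈ E j := by
    rw [ae_iff]
    refine le_antisymm ?_ (zero_le)
    have ht : Tendsto (fun j : ℕ => ENNReal.ofReal (1 / ((j : ℝ) + 1))) atTop (𝓝 0) := by
      have := (ENNReal.continuous_ofReal.tendsto 0).comp (tendsto_one_div_add_atTop_nhds_zero_nat (𝕜 := ℝ))
      rwa [ENNReal.ofReal_zero] at this
    refine ge_of_tendsto' ht fun j => (measure_mono ?_).trans (hEμ j)
    intro ω hω hj
    exact hω ⟨j, hj⟩
  have hc : ∀ᵐ ω ∂μ, CauchySeq (fun n => (AA T n f).1 ω) := by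
    filter_upwards [h0, ae_all_iff.2 hN] with ω ⟨k, hk⟩ h
    rw [Metric.cauchySeq_iff]
    intro ε hε
    obtain ⟨j, hj⟩ := exists_nat_one_div_lt hε
    refine ⟨N k j, fun m hm n hn => ?_⟩
    rw [Real.dist_eq]
    exact (h k hk j m hm n hn).trans_lt hj
  have hl : ∀ᵐ ω ∂μ, Tendsto (fun n => (AA T n f).1 ω) atTop 
      (𝓝 (limUnder atTop (fun n => (AA T n f).1 ω))) := hc.mono fun ω h => h.tendsto_limUnder
  have hm := aestronglyMeasurable_of_tendsto_ae atTop (fun n => (AA T n f).1.aestronglyMeasurable) hl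
  refine ⟨AEEqFun.mk _ hm, ?_⟩
  filter_upwards [hl, AEEqFun.coeFn_mk _ hm] with ω h1 h2
  rwa [h2]

theorem fatou_clp {μ : Measure Ω} {T : VV μ →ₗ[ℝ] VV μ} (hT : IsDS μ 1 T) (u b : VV μ) {C : ℝ} (hC : 0 ≤ C)
    (hu : Integrable u.1 μ) (hb : ∀ᵐ ω ∂μ, |b.1 ω| ≤ C) (g : Ω →ₘ[μ] ℝ) 
    (hg : ∀ᵐ ω ∂μ, Tendsto (fun n => (AA T n (u + b)).1 ω) atTop (𝓝 (g ω))) : 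
    Integrable (fun ω => g ω - clp C (g ω)) μ := by
  have hm : ∀ g : Ω →ₘ[μ] ℝ, AEStronglyMeasurable (fun ω => g ω - clp C (g ω)) μ := fun g => 
    g.aestronglyMeasurable.sub ((clp_cont C).comp_aestronglyMeasurable g.aestronglyMeasurable)
  have hF := Lp.eLpNorm_lim_le_liminf_eLpNorm (p := 1) (μ := μ) 
    (f := fun n ω => (AA T n (u + b)).1 ω - clp C ((AA T n (u + b)).1 ω)) (fun n => hm _) 
    (fun ω => g ω - clp C (g ω)) (hg.mono fun ω h => h.sub (((clp_cont C).tendsto _).comp h))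
  rw [← memLp_one_iff_integrable]
  refine ⟨hm g, hF.trans_lt ?_⟩
  have hle : ∀ n, eLpNorm (fun ω => (AA T n (u + b)).1 ω - clp C ((AA T n (u + b)).1 ω)) 1 μ ≤ 
      ENNReal.ofReal (∫ ω, |u.1 ω| ∂μ) := by
    intro n
    have hi := (hT.AA n).int u hu
    calc _ ≤ eLpNorm (AA T n u).1 1 μ := by
          apply eLpNorm_mono_ae
          have h1 := (hT.AA n).bdd b C hC hb
          rw [map_add]
          filter_upwards [h1, ae_add (AA T n u) (AA T n b)] with ω h1 h2
          rw [Real.norm_eq_abs, sub_clp hC, h2, Real.norm_eq_abs]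
          have := abs_add_le ((AA T n u).1 ω) ((AA T n b).1 ω)
          exact max_le (by linarith) (abs_nonneg _)
      _ = ENNReal.ofReal (∫ ω, |(AA T n u).1 ω| ∂μ) := by
          rw [eLpNorm_one_eq_lintegral_enorm, ← ofReal_integral_norm_eq_lintegral_enorm hi]
          rfl
      _ ≤ _ := ENNReal.ofReal_le_ofReal (by simpa using (hT.AA n).int_le u hu)
  refine lt_of_le_of_lt (b := ENNReal.ofReal (∫ ω, |u.1 ω| ∂μ)) ?_ ENNReal.ofReal_lt_top
  exact liminf_le_of_frequently_le' (Frequently.of_forall hle)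

theorem limit_memRmu {μ : Measure Ω} {T : VV μ →ₗ[ℝ] VV μ} (hT : IsDS μ 1 T) (f : VV μ) 
    (hf : ∀ lam : ℝ, 0 < lam → μ {ω | lam < |f.1 ω|} < ∞) (g : Ω →ₘ[μ] ℝ)
    (hg : ∀ᵐ ω ∂μ, Tendsto (fun n => (AA T n f).1 ω) atTop (𝓝 (g ω))) : MemRmu μ g := by
  have hcl : ∀ δ : ℝ, 0 < δ → Integrable (fun ω => g ω - clp δ (g ω)) μ := by
    intro δ hδ
    obtain ⟨u, b, rfl, hu, hb⟩ := rmu_decomp f hf hδ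
    exact fatou_clp hT u b hδ.le hu hb g hg
  constructor
  · obtain ⟨b, hb⟩ := exists_clp g zero_le_one
    have hi : Integrable (g - b.1) μ := (hcl 1 one_pos).congr (by
      filter_upwards [hb, AEEqFun.coeFn_sub g b.1] with ω h1 h2
      rw [h2, Pi.sub_apply, h1])
    refine mem_iff_ae.2 ⟨g - b.1, b.1, hi, ⟨1, zero_le_one, hb.mono fun ω h => ?_⟩, by simp⟩
    rw [h]; exact clp_abs zero_le_one _
  · intro lam hl
    refine lt_of_le_of_lt (measure_mono ?_) ((hcl (lam/2) (by positivity)).abs.measure_gt_lt_top 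
      (show 0 < lam / 4 by positivity))
    intro ω (hω : lam < |g ω|)
    change lam / 4 < |g ω - clp (lam/2) (g ω)|
    rw [sub_clp (by positivity)]
    exact lt_max_of_lt_left (by linarith)

/-- **Commutative case of Theorem 4.4**: for a positive Dunford–Schwartz operator `T`
on a σ-finite measure space and `f ∈ R_μ`, the Cesàro averages
`A_n(f) = (1/n) ∑_{k=0}^{n-1} T^k f` converge almost uniformly to some `f̂ ∈ R_μ`. -/
theorem cesaro_auTendsto_of_memRmu (μ : Measure Ω) [SigmaFinite μ]
    (T : (Ω →ₘ[μ] ℝ) → (Ω →ₘ[μ] ℝ)) (hT : IsPosDS μ T)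
    (f : Ω →ₘ[μ] ℝ) (hf : MemRmu μ f) :
    ∃ fhat : Ω →ₘ[μ] ℝ, MemRmu μ fhat ∧
      AuTendsto μ atTop (fun n => cesaro μ T n f) fhat := by
  have hD := isDS_TL hT
  let F : VV μ := ⟨f, hf.1⟩
  obtain ⟨g, hg⟩ := ae_conv hD F hf.2
  refine ⟨g, limit_memRmu hD F hf.2 g hg, ?_⟩
  intro ε hε
  obtain ⟨E, hE, hEμ, N, hN⟩ := au_set hD F hf.2 hε
  refine ⟨E, hE, hEμ, ?_⟩
  rw [ENNReal.tendsto_nhds_zero]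
  intro δ hδ
  obtain ⟨j, hj⟩ : ∃ j : ℕ, ENNReal.ofReal (1 / ((j : ℝ) + 1)) < δ := by
    have ht : Tendsto (fun j : ℕ => ENNReal.ofReal (1 / ((j : ℝ) + 1))) atTop (𝓝 0) := by
      have := (ENNReal.continuous_ofReal.tendsto 0).comp (tendsto_one_div_add_atTop_nhds_zero_nat (𝕜 := ℝ))
      rwa [ENNReal.ofReal_zero] at this
    exact (ht.eventually (gt_mem_nhds hδ)).exists
  filter_upwards [eventually_ge_atTop (N j)] with n hn
  refine le_trans (top_le_of_ae (C := 1 / ((j : ℝ) + 1)) ?_) hj.le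
  have hc : cesaro μ T n f = (AA (TL hT) n F).1 := (coe_AA hT n F).symm
  rw [hc]
  filter_upwards [hN, hg, AEEqFun.coeFn_sub (AA (TL hT) n F).1 g] with ω h1 h2 h3
  by_cases hω : ω ∈ E
  · rw [indicator_of_mem hω, h3, Pi.sub_apply]
    have ht : Tendsto (fun m => |(AA (TL hT) n F).1 ω - (AA (TL hT) m F).1 ω|) atTop 
      (𝓝 |(AA (TL hT) n F).1 ω - g ω|) := (tendsto_const_nhds.sub h2).abs
    refine le_of_tendsto ht ?_
    filter_upwards [eventually_ge_atTop (N j)] with m hm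
    exact h1 hω j n hn m hm
  · rw [indicator_of_notMem hω, abs_zero]; positivity
end
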